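/- arXiv:1710.04293 — 2 statements merged into one kernel-verified Lean document; each statement's English description precedes it below -/
import Mathlib

section
/- Let B ⊆ K be the k-subalgebra of the Koszul complex K generated by 1 and all products z_{a,b} · z_{a',b'} of two cycles z_{a,b}, z_{a',b'} (over all lengths and all sequences of variables a, b, a', b'), and let B_t := B ∩ K_t. Then for every t ≥ 0, every Koszul cycle c ∈ ker(d_t) all of whose homogeneous components have even internal degree (an element of S_e ⊗_k ⋀^t S_2 has internal degree e + 2t) can be written as c = u + d_{t+1}(w) with u ∈ B_t and w ∈ K_{t+1}. Consequently, the Koszul homology algebra of the second Veronese subalgebra S^(2) = ⊕_d S_{2d} is generated by its lowest linear strand. -/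
set_option maxHeartbeats 1000000
set_option synthInstance.maxHeartbeats 400000

open scoped TensorProduct
open MvPolynomial

noncomputable section

variable (k : Type) [Field k] (n : ℕ)

/-- The polynomial ring `S = k[x_1,…,x_n]`. -/
abbrev S := MvPolynomial (Fin n) k

/-- The space `S_1` of linear forms. -/
abbrev S1 := homogeneousSubmodule (Fin n) k 1

/-- The space `S_2` of quadratic forms. -/
abbrev S2 := homogeneousSubmodule (Fin n) k 2

/-- The ambient algebra `S ⊗ Λ(S_2)` containing all terms `K_t = S ⊗ ⋀^t S_2`
of the Koszul complex `K(𝔪², S)`; the product is `(f ⊗ ω)(g ⊗ η) = fg ⊗ ω∧η`. -/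
abbrev KK := (MvPolynomial (Fin n) k) ⊗[k] ExteriorAlgebra k (S2 k n)

variable {k n}

/-- The product of two linear forms, as an element of `S_2`. -/
def mulW (a b : S1 k n) : S2 k n :=
  ⟨(a : S k n) * (b : S k n), by
    rw [mem_homogeneousSubmodule]
    have ha := (mem_homogeneousSubmodule 1 (a : S k n)).1 a.2
    have hb := (mem_homogeneousSubmodule 1 (b : S k n)).1 b.2
    simpa using ha.mul hb⟩

/-- The variable `x_i`, as an element of `S_1`. -/
def xv (i : Fin n) : S1 k n :=
  ⟨X i, by rw [mem_homogeneousSubmodule]; exact isHomogeneous_X _ _⟩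

/-- The quadratic monomial `x_i x_j`, as an element of `S_2`. -/
def q (i j : Fin n) : S2 k n := mulW (xv i) (xv j)

variable (k n)

/-- `K_t = S ⊗ ⋀^t S_2`, as a subspace of the ambient algebra `KK`. -/
def Kt (t : ℕ) : Submodule k (KK k n) :=
  LinearMap.range (TensorProduct.map (LinearMap.id : S k n →ₗ[k] S k n)
    (Submodule.subtype (⋀[k]^t (S2 k n))))

variable {k n}

/-- The family of Koszul differentials, encoded as linear endomorphisms of the
ambient space `KK`: `D t` restricted to `K_t` is the `t`-th Koszul differential
`d_t : K_t → K_{t-1}`, i.e. `d_0 = 0` and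
`d_t(f ⊗ m_1 ∧ ⋯ ∧ m_t) = Σ_j (-1)^{j-1} (f·m_j) ⊗ m_1 ∧ ⋯ ∧ m̂_j ∧ ⋯ ∧ m_t`. -/
def IsKoszulDiff (D : ℕ → KK k n →ₗ[k] KK k n) : Prop :=
  D 0 = 0 ∧
  ∀ (t : ℕ) (f : S k n) (m : Fin (t+1) → S2 k n),
    D (t+1) (f ⊗ₜ[k] (ExteriorAlgebra.ιMulti k (t+1) m : ExteriorAlgebra k (S2 k n)))
      = ∑ j : Fin (t+1), ((-1:ℤ)^(j:ℕ)) •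
          ((f * ((m j : S k n))) ⊗ₜ[k]
            (ExteriorAlgebra.ιMulti k t (fun l => m (j.succAbove l)) : ExteriorAlgebra k (S2 k n)))

/-- The cycle `z_{a,b} = Σ_{σ ∈ 𝔖_{t+1}} sgn(σ) a_{σ(t+1)} ⊗ (b_1 a_{σ(1)} ∧ ⋯ ∧ b_t a_{σ(t)})`. -/
def zel (t : ℕ) (a : Fin (t+1) → S1 k n) (b : Fin t → S1 k n) : KK k n :=
  ∑ σ : Equiv.Perm (Fin (t+1)),
    ((Equiv.Perm.sign σ : ℤ)) •
      (((a (σ (Fin.last t)) : S k n)) ⊗ₜ[k]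
        (ExteriorAlgebra.ιMulti k t (fun j => mulW (b j) (a (σ j.castSucc))) :
          ExteriorAlgebra k (S2 k n)))

/-- The cycle `Z_i` (0-indexed: `Zel i` is the paper's `Z_i` for `0 ≤ i ≤ n-1`), namely
`Z_i = Σ_{j=0}^{i} (-1)^{j} x_j ⊗ (x_0 x_i ∧ ⋯ ∧ x̂_j x_i ∧ ⋯ ∧ x_{i-1} x_i ∧ x_i²)`. -/
def Zel (i : Fin n) : KK k n :=
  ∑ j : Fin ((i:ℕ)+1),
    ((-1:ℤ)^(j:ℕ)) •
      ((X (Fin.castLE i.isLt j) : S k n) ⊗ₜ[k]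
        (ExteriorAlgebra.ιMulti k (i:ℕ)
          (fun l : Fin (i:ℕ) => q (Fin.castLE i.isLt (j.succAbove l)) i) :
            ExteriorAlgebra k (S2 k n)))


variable (k n) in
/-- The subspace of `S` of polynomials all of whose homogeneous components have even
degree, i.e. the second Veronese `S^(2) = ⊕_d S_{2d}`. -/
def Seven : Submodule k (S k n) := ⨆ e : ℕ, homogeneousSubmodule (Fin n) k (2*e)

variable (k n) in
/-- The subspace of `K_t = S ⊗ ⋀^t S_2` of elements all of whose homogeneous components
have even internal degree (an element of `S_e ⊗ ⋀^t S_2` has internal degree `e + 2t`). -/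
def KtEven (t : ℕ) : Submodule k (KK k n) :=
  LinearMap.range (TensorProduct.map (Submodule.subtype (Seven k n))
    (Submodule.subtype (⋀[k]^t (S2 k n))))


section Helpers


/-! ### Operators -/

def lam (i l : Fin n) : Module.Dual k (S2 k n) :=
  (lcoeff k 0) ∘ₗ (pderiv i).toLinearMap ∘ₗ (pderiv l).toLinearMap ∘ₗ (S2 k n).subtype

lemma C_lam (i l : Fin n) (p : S2 k n) : C (lam i l p) = pderiv i (pderiv l (p : S k n)) := by
  have h : (p : S k n).IsHomogeneous 2 := p.2
  have h2 : (pderiv i (pderiv l (p : S k n))).IsHomogeneous 0 := (h.pderiv (i := l)).pderiv (i := i)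
  have := (totalDegree_eq_zero_iff_eq_C (p := pderiv i (pderiv l (p : S k n)))).1 (by
    exact Nat.le_zero.1 h2.totalDegree_le)
  rw [this]; simp [lam]

lemma euler2 (r : ℕ) (f : S k n) (hf : f.IsHomogeneous r) :
    ∑ i, ∑ l, X i * X l * pderiv i (pderiv l f) = ((r * (r - 1) : ℕ) : S k n) * f := by
  have h1 : ∀ l, ∑ i, X i * pderiv i (pderiv l f) = ((r - 1 : ℕ) : S k n) * pderiv l f := by
    intro l
    rw [(hf.pderiv (i := l)).sum_X_mul_pderiv, nsmul_eq_mul]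
  rw [Finset.sum_comm]
  have h2 : ∀ l, ∑ i, X i * X l * pderiv i (pderiv l f) =
      ((r - 1 : ℕ) : S k n) * (X l * pderiv l f) := by
    intro l
    rw [mul_left_comm, ← h1 l, Finset.mul_sum]
    exact Finset.sum_congr rfl fun i _ => by ring
  rw [Finset.sum_congr rfl fun l _ => h2 l, ← Finset.mul_sum, hf.sum_X_mul_pderiv, nsmul_eq_mul]
  push_cast; ring

lemma euler_lam (p : S2 k n) :
    ∑ i, ∑ l, lam i l p • (X i * X l) = (2 : S k n) * p := by
  have := euler2 2 (p : S k n) p.2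
  rw [show ((2 * (2 - 1) : ℕ) : S k n) = 2 by norm_num] at this
  rw [← this]
  refine Finset.sum_congr rfl fun i _ => Finset.sum_congr rfl fun l _ => ?_
  rw [← C_lam, smul_eq_C_mul, mul_comm]

lemma sum_lam_q [CharZero k] (p : S2 k n) :
    ∑ i, ∑ l, lam i l p • (q i l : S2 k n) = (2 : k) • p := by
  apply Subtype.ext
  have := euler_lam p
  simp only [Submodule.coe_sum, Submodule.coe_smul, q, mulW, xv]
  rw [this, smul_eq_C_mul, map_ofNat]

variable (k n) in
def dK : KK k n →ₗ[k] KK k n :=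
  (2⁻¹ : k) • ∑ i : Fin n, ∑ l : Fin n,
    TensorProduct.map (LinearMap.mulLeft k (X i * X l : S k n))
      (CliffordAlgebra.contractLeft (Q := (0 : QuadraticForm k (S2 k n))) (lam i l))

variable (k n) in
def dl : KK k n →ₗ[k] KK k n :=
  ∑ i : Fin n, ∑ l : Fin n,
    TensorProduct.map ((pderiv i).toLinearMap ∘ₗ (pderiv l).toLinearMap)
      (LinearMap.mulLeft k (ExteriorAlgebra.ι k (q i l : S2 k n)))

abbrev Lq (p : S2 k n) : KK k n →ₗ[k] KK k n :=
  TensorProduct.map LinearMap.id (LinearMap.mulLeft k (ExteriorAlgebra.ι k p))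

abbrev Ms (f : S k n) : KK k n →ₗ[k] KK k n :=
  TensorProduct.map (LinearMap.mulLeft k f) LinearMap.id

lemma dK_tmul (f : S k n) (ω : ExteriorAlgebra k (S2 k n)) :
    dK k n (f ⊗ₜ ω) = (2⁻¹ : k) • ∑ i : Fin n, ∑ l : Fin n,
      (X i * X l * f) ⊗ₜ[k] (CliffordAlgebra.contractLeft (Q := (0 : QuadraticForm k (S2 k n))) (lam i l) ω) := by
  simp only [dK, LinearMap.sum_apply, LinearMap.smul_apply, TensorProduct.map_tmul, LinearMap.mulLeft_apply]

lemma dl_tmul (f : S k n) (ω : ExteriorAlgebra k (S2 k n)) :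
    dl k n (f ⊗ₜ ω) = ∑ i : Fin n, ∑ l : Fin n,
      (pderiv i (pderiv l f)) ⊗ₜ[k] (ExteriorAlgebra.ι k (q i l : S2 k n) * ω) := by
  simp [dl, LinearMap.sum_apply]

lemma dK_tmul_one (f : S k n) : dK k n (f ⊗ₜ 1) = 0 := by
  rw [dK_tmul]
  simp [CliffordAlgebra.contractLeft_one]

lemma dK_Ms (f : S k n) (x : KK k n) : dK k n (Ms f x) = Ms f (dK k n x) := by
  induction x using TensorProduct.induction_on with
  | zero => simp
  | add x y hx hy => simp only [map_add, hx, hy]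
  | tmul g ω =>
    simp only [TensorProduct.map_tmul, dK_tmul, map_smul, map_sum, LinearMap.mulLeft_apply,
      LinearMap.id_apply]
    congr 1
    refine Finset.sum_congr rfl fun i _ => Finset.sum_congr rfl fun l _ => ?_
    congr 1; ring

lemma dK_Lq [CharZero k] (p : S2 k n) (x : KK k n) :
    dK k n (Lq p x) = Ms (p : S k n) x - Lq p (dK k n x) := by
  induction x using TensorProduct.induction_on with
  | zero => simp
  | add x y hx hy => simp only [map_add, hx, hy]; abel
  | tmul f ω =>
    simp only [TensorProduct.map_tmul, dK_tmul, map_smul, map_sum, LinearMap.mulLeft_apply,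
      LinearMap.id_apply]
    have h : ∀ i l, (X i * X l * f) ⊗ₜ[k] (CliffordAlgebra.contractLeft
        (Q := (0 : QuadraticForm k (S2 k n))) (lam i l) (ExteriorAlgebra.ι k p * ω)) =
        ((lam i l p • (X i * X l)) * f) ⊗ₜ[k] ω -
        (X i * X l * f) ⊗ₜ[k] (ExteriorAlgebra.ι k p * CliffordAlgebra.contractLeft
        (Q := (0 : QuadraticForm k (S2 k n))) (lam i l) ω) := by
      intro i l
      have := CliffordAlgebra.contractLeft_ι_mul (Q := (0 : QuadraticForm k (S2 k n)))
        (lam i l) p ω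
      rw [ExteriorAlgebra.ι, this, TensorProduct.tmul_sub, smul_mul_assoc, TensorProduct.tmul_smul,
        TensorProduct.smul_tmul']
    simp only [h, Finset.sum_sub_distrib, smul_sub]
    congr 1
    simp only [← TensorProduct.sum_tmul, ← Finset.sum_mul, euler_lam]
    rw [TensorProduct.smul_tmul', ← smul_mul_assoc]
    congr 2
    rw [smul_eq_C_mul, ← mul_assoc, show (2 : S k n) = C (2 : k) from (map_ofNat C 2).symm, ← C_mul]
    simp

lemma ιM_succ {t : ℕ} (m : Fin (t+1) → S2 k n) : ExteriorAlgebra.ιMulti k (t+1) m =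
    ExteriorAlgebra.ι k (m 0) * ExteriorAlgebra.ιMulti k t (fun j => m j.succ) := by
  rw [ExteriorAlgebra.ιMulti_succ_apply]; rfl

lemma dK_ιMulti [CharZero k] (t : ℕ) (f : S k n) (m : Fin (t+1) → S2 k n) :
    dK k n (f ⊗ₜ[k] (ExteriorAlgebra.ιMulti k (t+1) m : ExteriorAlgebra k (S2 k n)))
      = ∑ j : Fin (t+1), ((-1:ℤ)^(j:ℕ)) •
          ((f * ((m j : S k n))) ⊗ₜ[k]
            (ExteriorAlgebra.ιMulti k t (fun l => m (j.succAbove l)) : ExteriorAlgebra k (S2 k n))) := by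
  induction t with
  | zero =>
    have := dK_Lq (m 0) (f ⊗ₜ[k] (1 : ExteriorAlgebra k (S2 k n)))
    simp only [dK_tmul_one, map_zero, sub_zero, TensorProduct.map_tmul, LinearMap.mulLeft_apply,
      LinearMap.id_apply] at this
    rw [ιM_succ]
    rw [ExteriorAlgebra.ιMulti_zero_apply, this]
    simp [mul_comm]
  | succ t ih =>
    have := dK_Lq (m 0) (f ⊗ₜ[k] (ExteriorAlgebra.ιMulti k (t+1) (fun j => m j.succ)))
    rw [ih] at this
    simp only [TensorProduct.map_tmul, LinearMap.mulLeft_apply,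
      LinearMap.id_apply, ← ιM_succ] at this
    rw [this, sub_eq_add_neg]
    conv_rhs => rw [Fin.sum_univ_succ]
    congr 1
    · simp [mul_comm]
    · rw [map_sum, ← Finset.sum_neg_distrib]
      refine Finset.sum_congr rfl fun j _ => ?_
      rw [map_zsmul, TensorProduct.map_tmul, LinearMap.mulLeft_apply, LinearMap.id_apply, ιM_succ (t := t),
        Fin.val_succ, pow_succ, mul_neg_one, neg_smul]
      simp only [Fin.succ_succAbove_zero, Fin.succ_succAbove_succ]

/-- Laplacian on decomposables -/
lemma lap_Lq [CharZero k] (p : S2 k n) (f : S k n) (ω : ExteriorAlgebra k (S2 k n)) :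
    dK k n (dl k n (f ⊗ₜ (ExteriorAlgebra.ι k p * ω))) + dl k n (dK k n (f ⊗ₜ (ExteriorAlgebra.ι k p * ω)))
    = Lq p (dK k n (dl k n (f ⊗ₜ ω)) + dl k n (dK k n (f ⊗ₜ ω)))
      + (2 : k) • f ⊗ₜ (ExteriorAlgebra.ι k p * ω)
      + (2 : k) • ∑ i, ∑ l, (pderiv i f * pderiv l (p : S k n)) ⊗ₜ[k]
          (ExteriorAlgebra.ι k (q i l : S2 k n) * ω) := by
  have hanti : ∀ x, dl k n (Lq p x) = - Lq p (dl k n x) := by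
    intro x
    induction x using TensorProduct.induction_on with
    | zero => simp
    | add x y hx hy => simp only [map_add, hx, hy]; abel
    | tmul g ω =>
      simp only [TensorProduct.map_tmul, dl_tmul, map_sum, LinearMap.mulLeft_apply,
        LinearMap.id_apply, ← Finset.sum_neg_distrib]
      refine Finset.sum_congr rfl fun i _ => Finset.sum_congr rfl fun l _ => ?_
      rw [← TensorProduct.tmul_neg, ← mul_assoc, ← mul_assoc, ← neg_mul,
        eq_neg_of_add_eq_zero_left (ExteriorAlgebra.ι_add_mul_swap (R := k) (q i l) p)]
  have hM : dl k n (Ms (p : S k n) (f ⊗ₜ ω)) = Ms (p : S k n) (dl k n (f ⊗ₜ ω))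
      + (2 : k) • f ⊗ₜ (ExteriorAlgebra.ι k p * ω)
      + (2 : k) • ∑ i, ∑ l, (pderiv i f * pderiv l (p : S k n)) ⊗ₜ[k]
          (ExteriorAlgebra.ι k (q i l : S2 k n) * ω) := by
    simp only [TensorProduct.map_tmul, dl_tmul, map_sum, LinearMap.mulLeft_apply,
        LinearMap.id_apply, pderiv_mul, map_add]
    have h2 : (2 : k) • f ⊗ₜ (ExteriorAlgebra.ι k p * ω) =
       ∑ i, ∑ l, (pderiv i (pderiv l (p : S k n)) * f) ⊗ₜ[k] (ExteriorAlgebra.ι k (q i l : S2 k n) * ω) := by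
      rw [← TensorProduct.tmul_smul, ← smul_mul_assoc, ← map_smul, ← sum_lam_q p]
      simp only [map_sum, map_smul, Finset.sum_mul, TensorProduct.tmul_sum, smul_mul_assoc,
        TensorProduct.tmul_smul, ← C_lam, ← smul_eq_C_mul, TensorProduct.smul_tmul']
    have h3 : (2 : k) • ∑ i, ∑ l, (pderiv i f * pderiv l (p : S k n)) ⊗ₜ[k]
          (ExteriorAlgebra.ι k (q i l : S2 k n) * ω) =
        ∑ i, ∑ l, (pderiv l (p : S k n) * pderiv i f) ⊗ₜ[k]
          (ExteriorAlgebra.ι k (q i l : S2 k n) * ω) +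
        ∑ i, ∑ l, (pderiv i (p : S k n) * pderiv l f) ⊗ₜ[k]
          (ExteriorAlgebra.ι k (q i l : S2 k n) * ω) := by
      rw [two_smul]
      congr 1
      · refine Finset.sum_congr rfl fun i _ => Finset.sum_congr rfl fun l _ => ?_
        rw [mul_comm]
      · rw [Finset.sum_comm]
        refine Finset.sum_congr rfl fun i _ => Finset.sum_congr rfl fun l _ => ?_
        rw [mul_comm, show (q l i : S2 k n) = q i l from Subtype.ext (mul_comm _ _)]
    rw [h2, h3]
    simp only [TensorProduct.add_tmul, Finset.sum_add_distrib]
    abel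
  have e : f ⊗ₜ[k] (ExteriorAlgebra.ι k p * ω) = Lq p (f ⊗ₜ ω) := by simp
  rw [e, hanti, dK_Lq, map_sub, map_neg, dK_Lq, hanti, hM, ← e, map_add]
  abel

lemma lap_ιMulti [CharZero k] (r t : ℕ) (f : S k n) (hf : f.IsHomogeneous r) (m : Fin t → S2 k n) :
    dK k n (dl k n (f ⊗ₜ[k] ExteriorAlgebra.ιMulti k t m)) +
      dl k n (dK k n (f ⊗ₜ[k] ExteriorAlgebra.ιMulti k t m)) =
    ((r * (r - 1) + 2 * t : ℕ) : k) • (f ⊗ₜ[k] ExteriorAlgebra.ιMulti k t m) +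
    (2 : k) • ∑ j, ∑ i, ∑ l, (pderiv i f * pderiv l (m j : S k n)) ⊗ₜ[k]
      ExteriorAlgebra.ιMulti k t (Function.update m j (q i l)) := by
  induction t with
  | zero =>
    rw [ExteriorAlgebra.ιMulti_zero_apply, dK_tmul_one, map_zero, add_zero, dl_tmul]
    simp only [map_sum, Finset.univ_eq_empty, Finset.sum_empty, smul_zero, add_zero, mul_zero]
    have h : ∀ (i l : Fin n) (g : S k n), dK k n (g ⊗ₜ[k] (ExteriorAlgebra.ι k (q i l : S2 k n) * 1)) =
        (X i * X l * g) ⊗ₜ[k] 1 := by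
      intro i l g
      have := dK_Lq (q i l) (g ⊗ₜ[k] (1 : ExteriorAlgebra k (S2 k n)))
      simp only [dK_tmul_one, map_zero, sub_zero, TensorProduct.map_tmul, LinearMap.mulLeft_apply,
        LinearMap.id_apply] at this
      exact this
    simp only [h, ← TensorProduct.sum_tmul, euler2 r f hf]
    rw [TensorProduct.smul_tmul', smul_eq_C_mul, map_natCast]
  | succ t ih =>
    rw [ιM_succ, lap_Lq, ih, Fin.sum_univ_succ]
    simp only [map_add, map_smul, map_sum, TensorProduct.map_tmul, LinearMap.mulLeft_apply,
        LinearMap.id_apply, smul_add, ιM_succ, Function.update_self, Function.update_of_ne (Fin.succ_ne_zero _).symm,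
        Function.update_of_ne (Fin.succ_ne_zero _)]
    have e1 : ∀ (j : Fin t) (x : S2 k n), (fun j' : Fin t => Function.update m j.succ x j'.succ) =
        Function.update (fun j' : Fin t => m j'.succ) j x := by
      intro j x; ext j'
      by_cases h : j' = j
      · subst h; simp
      · rw [Function.update_of_ne h, Function.update_of_ne (by simpa using h)]
    have e0 : ∀ (x : S2 k n), (fun j' : Fin t => Function.update m 0 x j'.succ) =
        (fun j' : Fin t => m j'.succ) := by
      intro x; ext j'
      rw [Function.update_of_ne (Fin.succ_ne_zero _)]
    simp only [e1, e0]
    rw [show (r * (r - 1) + 2 * (t + 1) : ℕ) = (r * (r-1) + 2 * t) + 2 by ring, Nat.cast_add (r * (r-1) + 2 * t) 2, Nat.cast_ofNat, add_smul]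
    abel


/-! ### Words -/

abbrev J (r t : ℕ) := Fin r ⊕ (Fin t ⊕ Fin t)
abbrev lg {r t : ℕ} (s : Fin r) : J r t := Sum.inl s
abbrev ea {r t : ℕ} (j : Fin t) : J r t := Sum.inr (Sum.inl j)
abbrev eb {r t : ℕ} (j : Fin t) : J r t := Sum.inr (Sum.inr j)

lemma mulW_comm (a b : S1 k n) : mulW a b = mulW b a := by
  apply Subtype.ext; simp [mulW, mul_comm]

def pm {r t : ℕ} (v : J r t → S1 k n) : KK k n :=
  (∏ s, (v (lg s) : S k n)) ⊗ₜ[k]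
    ExteriorAlgebra.ιMulti k t (fun j => mulW (v (ea j)) (v (eb j)))

variable (k) in
def pw {r t : ℕ} (w : J r t → Fin n) : KK k n := pm (fun x => xv (w x))

lemma pm_leg {r t : ℕ} (v : J r t → S1 k n) (s s' : Fin r) :
    pm (v ∘ Equiv.swap (lg s) (lg s')) = pm v := by
  unfold pm
  congr 1
  · rw [← Equiv.prod_comp (Equiv.swap s s')]
    refine Finset.prod_congr rfl fun x _ => ?_
    simp only [Function.comp]
    congr 2
    by_cases h1 : x = s
    · subst h1; simp
    · by_cases h2 : x = s'
      · subst h2; simp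
      · rw [Equiv.swap_apply_of_ne_of_ne h1 h2, Equiv.swap_apply_of_ne_of_ne (by simpa using h1) (by simpa using h2)]

lemma pm_eq_neg {r t : ℕ} (u v : J r t → S1 k n) (j j' : Fin t) (hj : j ≠ j')
    (hl : ∀ s, u (lg s) = v (lg s))
    (hQ : ∀ i, mulW (u (ea i)) (u (eb i)) =
      mulW (v (ea (Equiv.swap j j' i))) (v (eb (Equiv.swap j j' i)))) :
    pm u = - pm v := by
  unfold pm
  simp only [hl, hQ]
  have := (ExteriorAlgebra.ιMulti k t (M := S2 k n)).map_swap (fun i => mulW (v (ea i)) (v (eb i))) hj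
  simp only [Function.comp_def] at this
  rw [this, TensorProduct.tmul_neg]

lemma pm_flip {r t : ℕ} (v : J r t → S1 k n) (j : Fin t) :
    pm (v ∘ Equiv.swap (ea j) (eb j)) = pm v := by
  unfold pm
  congr 2
  funext i
  by_cases h : i = j
  · subst h; simp [mulW_comm]
  · simp only [Function.comp]
    rw [Equiv.swap_apply_of_ne_of_ne (by simpa using h) (by simp),
      Equiv.swap_apply_of_ne_of_ne (by simp) (by simpa using h)]

lemma pm_aabb {r t : ℕ} (v : J r t → S1 k n) (j j' : Fin t) (hj : j ≠ j') :
    pm (v ∘ Equiv.swap (ea j) (ea j')) = - pm (v ∘ Equiv.swap (eb j) (eb j')) := by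
  apply pm_eq_neg _ _ j j' hj
  · intro s; simp [Equiv.swap_apply_def]
  · intro i
    by_cases h1 : i = j
    · subst h1; simp [Equiv.swap_apply_def]
    · by_cases h2 : i = j'
      · subst h2; simp [Equiv.swap_apply_def]
      · simp [Equiv.swap_apply_def, h1, h2]

lemma pm_abba {r t : ℕ} (v : J r t → S1 k n) (j j' : Fin t) (hj : j ≠ j') :
    pm (v ∘ Equiv.swap (ea j) (eb j')) = - pm (v ∘ Equiv.swap (eb j) (ea j')) := by
  apply pm_eq_neg _ _ j j' hj
  · intro s; simp [Equiv.swap_apply_def]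
  · intro i
    by_cases h1 : i = j
    · subst h1; simp [Equiv.swap_apply_def, hj, hj.symm, mulW_comm (v (eb j'))]
    · by_cases h2 : i = j'
      · subst h2; simp [Equiv.swap_apply_def, h1, hj, mulW_comm (v (ea j))]
      · simp [Equiv.swap_apply_def, h1, h2]

lemma pm_edge {r t : ℕ} (v : J r t → S1 k n) (j j' : Fin t) (hj : j ≠ j') :
    pm (v ∘ (Equiv.swap (ea j) (ea j') * Equiv.swap (eb j) (eb j') : Equiv.Perm (J r t))) = - pm v := by
  apply pm_eq_neg _ _ j j' hj
  · intro s; simp [Equiv.swap_apply_def]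
  · intro i
    by_cases h1 : i = j
    · subst h1; simp [Equiv.swap_apply_def]
    · by_cases h2 : i = j'
      · subst h2; simp [Equiv.swap_apply_def, h1]
      · simp [Equiv.swap_apply_def, h1, h2]

lemma pderiv_prod_X {r : ℕ} (T : Finset (Fin r)) (w : Fin r → Fin n) (i : Fin n) :
    pderiv i (∏ s ∈ T, (X (w s) : S k n)) =
      ∑ s ∈ T, if w s = i then ∏ s' ∈ T.erase s, X (w s') else 0 := by
  induction T using Finset.induction_on with
  | empty => simp
  | insert a T ha ih =>
    rw [Finset.prod_insert ha, Derivation.leibniz, ih, Finset.sum_insert ha, Finset.erase_insert ha,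
      pderiv_X, add_comm]
    congr 1
    · simp [Pi.single_apply]
    · rw [smul_eq_mul, Finset.mul_sum]
      refine Finset.sum_congr rfl fun s hs => ?_
      have : s ≠ a := fun h => ha (h ▸ hs)
      rw [Finset.erase_insert_of_ne this.symm, Finset.prod_insert (by simp [ha])]
      split_ifs <;> simp

lemma pderiv_q (l a b : Fin n) : pderiv l ((q a b : S2 k n) : S k n) =
    (if a = l then X b else 0) + (if b = l then X a else 0) := by
  simp only [q, mulW, xv, Derivation.leibniz, pderiv_X, Pi.single_apply, smul_eq_mul, mul_ite,
    mul_one, mul_zero]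
  rw [add_comm]

lemma pw_leg_a {r t : ℕ} (w : J r t → Fin n) (s : Fin r) (j : Fin t) :
    (X (w (ea j)) * ∏ s' ∈ Finset.univ.erase s, (X (w (lg s')) : S k n)) ⊗ₜ[k]
      ExteriorAlgebra.ιMulti k t (Function.update (fun j => q (w (ea j)) (w (eb j))) j
        (q (w (lg s)) (w (eb j)))) = pw k (w ∘ Equiv.swap (lg s) (ea j)) := by
  unfold pw pm
  congr 1
  · rw [← Finset.mul_prod_erase _ _ (Finset.mem_univ s)]
    simp only [Function.comp, Equiv.swap_apply_left, xv]
    congr 1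
    refine Finset.prod_congr rfl fun x hx => ?_
    rw [Equiv.swap_apply_of_ne_of_ne (by simpa using hx) (by simp)]
  · congr 1; funext i
    by_cases h : i = j
    · subst h; simp [Equiv.swap_apply_def, q]
    · simp [Equiv.swap_apply_def, q, h]

lemma pw_leg_b {r t : ℕ} (w : J r t → Fin n) (s : Fin r) (j : Fin t) :
    (X (w (eb j)) * ∏ s' ∈ Finset.univ.erase s, (X (w (lg s')) : S k n)) ⊗ₜ[k]
      ExteriorAlgebra.ιMulti k t (Function.update (fun j => q (w (ea j)) (w (eb j))) j
        (q (w (lg s)) (w (ea j)))) = pw k (w ∘ Equiv.swap (lg s) (eb j)) := by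
  unfold pw pm
  congr 1
  · rw [← Finset.mul_prod_erase _ _ (Finset.mem_univ s)]
    simp only [Function.comp, Equiv.swap_apply_left, xv]
    congr 1
    refine Finset.prod_congr rfl fun x hx => ?_
    rw [Equiv.swap_apply_of_ne_of_ne (by simpa using hx) (by simp)]
  · congr 1; funext i
    by_cases h : i = j
    · subst h; simp [Equiv.swap_apply_def, q, mulW_comm]
    · simp [Equiv.swap_apply_def, q, h]

lemma lap_inner {r t : ℕ} (w : J r t → Fin n) (j : Fin t) :
    ∑ i, ∑ l, (pderiv i (∏ s, (X (w (lg s)) : S k n)) *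
        pderiv l ((q (w (ea j)) (w (eb j)) : S2 k n) : S k n)) ⊗ₜ[k]
      ExteriorAlgebra.ιMulti k t (Function.update (fun j => q (w (ea j)) (w (eb j))) j (q i l))
    = ∑ s, (pw k (w ∘ Equiv.swap (lg s) (ea j)) + pw k (w ∘ Equiv.swap (lg s) (eb j))) := by
  simp only [← pw_leg_a, ← pw_leg_b, pderiv_prod_X, Finset.sum_mul, TensorProduct.sum_tmul]
  rw [Finset.sum_congr rfl fun i _ => Finset.sum_comm, Finset.sum_comm]
  simp only [pderiv_q, mul_add, TensorProduct.add_tmul, mul_ite, ite_mul, zero_mul, mul_zero]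
  refine Finset.sum_congr rfl fun s _ => ?_
  simp only [Finset.sum_add_distrib, TensorProduct.ite_tmul, TensorProduct.zero_tmul]
  have key : ∀ (a b : Fin n) (F : Fin n → Fin n → KK k n),
      (∑ i, ∑ l, if b = l then (if a = i then F i l else 0) else 0) = F a b := by
    intro a b F; simp
  rw [key, key, add_comm]
  congr 1
  · rw [mul_comm]
  · rw [mul_comm]

lemma lap_word [CharZero k] {r t : ℕ} (w : J r t → Fin n) :
    dK k n (dl k n (pw k w)) + dl k n (dK k n (pw k w)) =
      ∑ x : J r t, ∑ y : J r t, pw k (w ∘ Equiv.swap x y) - ((r + 2 * t : ℕ) : k) • pw k w := by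
  have h0 : pw k w = (∏ s, (X (w (lg s)) : S k n)) ⊗ₜ[k]
    ExteriorAlgebra.ιMulti k t (fun j => q (w (ea j)) (w (eb j))) := rfl
  have hom : (∏ s : Fin r, (X (w (lg s)) : S k n)).IsHomogeneous r := by
    have := IsHomogeneous.prod (R := k) (Finset.univ) (fun s : Fin r => (X (w (lg s)) : S k n)) (fun _ => 1)
      (fun s _ => isHomogeneous_X _ _)
    simpa using this
  have hL := lap_ιMulti r t _ hom (fun j => q (w (ea j)) (w (eb j)))
  rw [← h0] at hL
  rw [hL, Finset.sum_congr rfl fun j _ => lap_inner w j]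
  have e1 : ∀ s s' : Fin r, pw k (w ∘ Equiv.swap (lg (t := t) s) (lg s')) = pw k w := fun s s' =>
    pm_leg (fun x => xv (w x)) s s'
  have e2 : ∀ j j' : Fin t, (pw k (w ∘ Equiv.swap (ea (r := r) j) (ea j')) + pw k (w ∘ Equiv.swap (ea (r := r) j) (eb j')))
     + (pw k (w ∘ Equiv.swap (eb (r := r) j) (ea j')) + pw k (w ∘ Equiv.swap (eb (r := r) j) (eb j')))
     = if j = j' then (4 : k) • pw k w else 0 := by
    intro j j'
    split_ifs with h
    · subst h
      have := pm_flip (fun x => (xv (w x) : S1 k n)) j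
      have h' : pw k (w ∘ Equiv.swap (ea (r := r) j) (eb j)) = pw k w := this
      rw [Equiv.swap_comm (eb j) (ea j), h', Equiv.swap_self, Equiv.swap_self]
      change pw k w + pw k w + (pw k w + pw k w) = _
      module
    · have h1 : pw k (w ∘ Equiv.swap (ea (r := r) j) (ea j')) = - pw k (w ∘ Equiv.swap (eb (r := r) j) (eb j')) :=
        pm_aabb (fun x => (xv (w x) : S1 k n)) j j' h
      have h2 : pw k (w ∘ Equiv.swap (ea (r := r) j) (eb j')) = - pw k (w ∘ Equiv.swap (eb (r := r) j) (ea j')) :=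
        pm_abba (fun x => (xv (w x) : S1 k n)) j j' h
      rw [h1, h2]; abel
  have e3 : ∑ j : Fin t, ∑ j' : Fin t, ((pw k (w ∘ Equiv.swap (ea (r := r) j) (ea j')) + pw k (w ∘ Equiv.swap (ea (r := r) j) (eb j')))
     + (pw k (w ∘ Equiv.swap (eb (r := r) j) (ea j')) + pw k (w ∘ Equiv.swap (eb (r := r) j) (eb j'))))
     = ((4 * t : ℕ) : k) • pw k w := by
    simp only [e2]
    simp [← Nat.cast_smul_eq_nsmul k, smul_smul, mul_comm]
  have e4 : ∀ (s : Fin r) (j : Fin t), Equiv.swap (ea j) (lg s) = Equiv.swap (lg s) (ea j) :=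
    fun s j => Equiv.swap_comm _ _
  have e5 : ∀ (s : Fin r) (j : Fin t), Equiv.swap (eb j) (lg s) = Equiv.swap (lg s) (eb j) :=
    fun s j => Equiv.swap_comm _ _
  simp only [Finset.sum_add_distrib] at e3
  simp only [Fintype.sum_sum_type, e1, e4, e5, Finset.sum_add_distrib]
  rw [Finset.sum_comm (s := (Finset.univ : Finset (Fin t))) (t := (Finset.univ : Finset (Fin r))),
    Finset.sum_comm (s := (Finset.univ : Finset (Fin t))) (t := (Finset.univ : Finset (Fin r)))]
  generalize (∑ s : Fin r, ∑ j : Fin t, pw k (w ∘ Equiv.swap (lg s) (ea j))) = A1 at *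
  generalize (∑ s : Fin r, ∑ j : Fin t, pw k (w ∘ Equiv.swap (lg s) (eb j))) = A2 at *
  have e6 : ∑ s : Fin r, ∑ s' : Fin r, pw k w = ((r * r : ℕ) : k) • pw k w := by
    simp [← Nat.cast_smul_eq_nsmul k, smul_smul]
  rw [e6]
  have e7 : (((r * (r - 1) + 2 * t : ℕ) : k)) = ((r * r : ℕ) : k) + ((4 * t : ℕ) : k) - ((r + 2 * t : ℕ) : k) := by
    rw [eq_sub_iff_add_eq]
    norm_cast
    rcases r with _ | r
    · simp; ring
    · simp; ring
  have e8 : ∀ a b c : k, (a + b - c) • pw k w = a • pw k w + b • pw k w - c • pw k w := by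
    intros; module
  rw [e7, e8, ← e3]
  module


/-! ### Functoriality -/

def s1m {N : ℕ} (s : Fin n → S1 k N) : S1 k n →ₗ[k] S1 k N :=
  LinearMap.restrict (aeval (fun i => (s i : S k N))).toLinearMap (by
    intro p hp
    have h : p.IsHomogeneous 1 := hp
    exact h.aeval (n := 1) (fun i => (s i : S k N)) (fun i => (s i).2))

def s2m {N : ℕ} (s : Fin n → S1 k N) : S2 k n →ₗ[k] S2 k N :=
  LinearMap.restrict (aeval (fun i => (s i : S k N))).toLinearMap (by
    intro p hp
    have h : p.IsHomogeneous 2 := hp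
    exact h.aeval (n := 1) (fun i => (s i : S k N)) (fun i => (s i).2))

def Phi {N : ℕ} (s : Fin n → S1 k N) : KK k n →ₐ[k] KK k N :=
  Algebra.TensorProduct.map (aeval (fun i => (s i : S k N))) (ExteriorAlgebra.map (s2m s))

lemma s1m_xv {N : ℕ} (s : Fin n → S1 k N) (i : Fin n) : s1m s (xv i) = s i := by
  apply Subtype.ext; simp [s1m, xv]

lemma s2m_mulW {N : ℕ} (s : Fin n → S1 k N) (a b : S1 k n) :
    s2m s (mulW a b) = mulW (s1m s a) (s1m s b) := by
  apply Subtype.ext; simp [s1m, s2m, mulW]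

lemma Phi_tmul {N : ℕ} (s : Fin n → S1 k N) (f : S k n) (ω : ExteriorAlgebra k (S2 k n)) :
    Phi s (f ⊗ₜ ω) = (aeval (fun i => (s i : S k N)) f) ⊗ₜ (ExteriorAlgebra.map (s2m s) ω) := by
  simp [Phi]

lemma Phi_ιMulti {N : ℕ} (s : Fin n → S1 k N) (f : S k n) {t : ℕ} (m : Fin t → S2 k n) :
    Phi s (f ⊗ₜ ExteriorAlgebra.ιMulti k t m) = (aeval (fun i => (s i : S k N)) f) ⊗ₜ
      (ExteriorAlgebra.ιMulti k t (fun j => s2m s (m j))) := by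
  rw [Phi_tmul, ExteriorAlgebra.map_apply_ιMulti]; rfl

lemma Phi_pm {N r t : ℕ} (s : Fin n → S1 k N) (v : J r t → S1 k n) :
    Phi s (pm v) = pm (fun x => s1m s (v x)) := by
  unfold pm
  rw [Phi_ιMulti]
  simp only [s2m_mulW, map_prod]
  rfl

lemma Phi_pw {N r t : ℕ} (s : Fin n → S1 k N) (w : J r t → Fin n) :
    Phi s (pw k w) = pm (fun x => s (w x)) := by
  unfold pw
  rw [Phi_pm]; simp only [s1m_xv]

lemma Phi_zel {N t : ℕ} (s : Fin n → S1 k N) (a : Fin (t+1) → S1 k n) (b : Fin t → S1 k n) :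
    Phi s (zel t a b) = zel t (fun i => s1m s (a i)) (fun i => s1m s (b i)) := by
  unfold zel
  simp only [map_sum, map_zsmul, Phi_ιMulti, s2m_mulW]
  rfl

lemma Phi_Lq {N : ℕ} (s : Fin n → S1 k N) (p : S2 k n) (x : KK k n) :
    Phi s (Lq p x) = Lq (s2m s p) (Phi s x) := by
  induction x using TensorProduct.induction_on with
  | zero => simp
  | add x y hx hy => simp only [map_add, hx, hy]
  | tmul f ω => simp [Phi_tmul, ExteriorAlgebra.map_apply_ι]

lemma Phi_Ms {N : ℕ} (s : Fin n → S1 k N) (f : S k n) (x : KK k n) :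
    Phi s (Ms f x) = Ms (aeval (fun i => (s i : S k N)) f) (Phi s x) := by
  induction x using TensorProduct.induction_on with
  | zero => simp
  | add x y hx hy => simp only [map_add, hx, hy]
  | tmul f ω => simp [Phi_tmul]

lemma Phi_dK [CharZero k] {N : ℕ} (s : Fin n → S1 k N) (x : KK k n) :
    Phi s (dK k n x) = dK k N (Phi s x) := by
  induction x using TensorProduct.induction_on with
  | zero => simp
  | add x y hx hy => simp only [map_add, hx, hy]
  | tmul f ω =>
    induction ω using CliffordAlgebra.left_induction with
    | algebraMap c =>
      have : f ⊗ₜ[k] ((algebraMap k (CliffordAlgebra (0 : QuadraticForm k (S2 k n)))) c) = (c • f) ⊗ₜ[k] (1 : ExteriorAlgebra k (S2 k n)) := by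
        rw [Algebra.algebraMap_eq_smul_one, TensorProduct.tmul_smul, TensorProduct.smul_tmul']
      erw [this]
      rw [dK_tmul_one, Phi_tmul, map_one, dK_tmul_one, map_zero]
    | add x y hx hy => rw [TensorProduct.tmul_add, map_add, map_add, map_add, map_add, hx, hy]
    | ι_mul ω p h =>
      have e : f ⊗ₜ[k] ((CliffordAlgebra.ι (0 : QuadraticForm k (S2 k n))) p * ω) = Lq p (f ⊗ₜ[k] (ω : ExteriorAlgebra k (S2 k n))) := by
        simp [ExteriorAlgebra.ι]
      erw [e]
      rw [dK_Lq, map_sub, Phi_Ms, Phi_Lq, Phi_Lq, dK_Lq]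
      erw [h]
      rfl

variable (k) in
def Fr {N : ℕ} (f : Fin n → Fin N) : KK k n →ₐ[k] KK k N := Phi (fun i => xv (f i))

lemma Fr_pw {N r t : ℕ} (f : Fin n → Fin N) (w : J r t → Fin n) :
    Fr k f (pw k w) = pw k (f ∘ w) := by
  unfold Fr
  rw [Phi_pw]; rfl

variable (k n) in
def Zset : Set (KK k n) := {v | ∃ (r : ℕ) (a : Fin (r+1) → Fin n) (b : Fin r → Fin n),
  v = zel r (fun l => (xv (a l) : S1 k n)) (fun l => xv (b l))}

variable (k n) in
abbrev Zs : Submodule k (KK k n) := Submodule.span k (Zset k n)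

variable (k n) in
def Bsub (r t : ℕ) : Submodule k (KK k n) :=
  (Zs k n) ^ r ⊔ (Kt k n (t+1)).map (dK k n)

lemma Kt_span (t : ℕ) : Kt k n t = Submodule.span k
    {x | ∃ (f : S k n) (m : Fin t → S2 k n), x = f ⊗ₜ[k] ExteriorAlgebra.ιMulti k t m} := by
  apply le_antisymm
  · rintro _ ⟨y, rfl⟩
    induction y using TensorProduct.induction_on with
    | zero => simp
    | add x y hx hy => rw [map_add]; exact add_mem hx hy
    | tmul f ω =>
      rw [TensorProduct.map_tmul]
      obtain ⟨ω, hω⟩ := ω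
      simp only [LinearMap.id_apply, Submodule.subtype_apply]
      rw [← ExteriorAlgebra.ιMulti_span_fixedDegree] at hω
      induction hω using Submodule.span_induction with
      | mem x h => obtain ⟨m, rfl⟩ := h; exact Submodule.subset_span ⟨f, m, rfl⟩
      | zero => simp
      | add x y _ _ hx hy => rw [TensorProduct.tmul_add]; exact add_mem hx hy
      | smul a x _ hx => rw [TensorProduct.tmul_smul]; exact Submodule.smul_mem _ _ hx
  · rw [Submodule.span_le]
    rintro _ ⟨f, m, rfl⟩
    refine ⟨f ⊗ₜ ⟨ExteriorAlgebra.ιMulti k t m, ?_⟩, by simp⟩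
    rw [← ExteriorAlgebra.ιMulti_span_fixedDegree]
    exact Submodule.subset_span ⟨m, rfl⟩

lemma Phi_Kt {N t : ℕ} (s : Fin n → S1 k N) : (Kt k n t).map (Phi s).toLinearMap ≤ Kt k N t := by
  rw [Kt_span, Submodule.map_span, Submodule.span_le]
  rintro _ ⟨_, ⟨f, m, rfl⟩, rfl⟩
  rw [Kt_span]
  exact Submodule.subset_span ⟨_, _, Phi_ιMulti s f m⟩

lemma Fr_Zs {N : ℕ} (f : Fin n → Fin N) (r : ℕ) :
    ((Zs k n) ^ r).map (Fr k f).toLinearMap ≤ (Zs k N) ^ r := by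
  rw [Submodule.map_pow]
  gcongr
  rw [Submodule.map_span, Submodule.span_le]
  rintro _ ⟨_, ⟨r, a, b, rfl⟩, rfl⟩
  refine Submodule.subset_span ⟨r, f ∘ a, f ∘ b, ?_⟩
  simp only [AlgHom.toLinearMap_apply, Fr, Phi_zel, s1m_xv]
  rfl

lemma Fr_Bsub [CharZero k] {N r t : ℕ} (f : Fin n → Fin N) {x : KK k n} (hx : x ∈ Bsub k n r t) :
    Fr k f x ∈ Bsub k N r t := by
  obtain ⟨y, hy, _, ⟨z, hz, rfl⟩, rfl⟩ := Submodule.mem_sup.1 hx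
  rw [map_add]
  refine Submodule.add_mem_sup (Fr_Zs f r ⟨y, hy, rfl⟩) ?_
  refine ⟨Fr k f z, Phi_Kt _ ⟨z, hz, rfl⟩, (Phi_dK _ _).symm⟩

/-! ### Polarization -/

def pmM (r t : ℕ) : MultilinearMap k (fun _ : J r t => S1 k n) (KK k n) where
  toFun := pm
  map_update_add' := by
    intro dec v x a b
    have hd : dec = instDecidableEqSum := Subsingleton.elim _ _
    subst hd
    rcases x with s | j | j
    · have h : ∀ c, pm (Function.update v (lg s) c) = ((c : S k n) * ∏ s' ∈ Finset.univ.erase s, (v (lg s') : S k n)) ⊗ₜ[k]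
          ExteriorAlgebra.ιMulti k t (fun j => mulW (v (ea j)) (v (eb j))) := by
        intro c
        unfold pm
        rw [← Finset.mul_prod_erase _ _ (Finset.mem_univ s)]
        simp only [Function.update_self]
        congr 2
        refine Finset.prod_congr rfl fun x hx => ?_
        rw [Function.update_of_ne (by simpa using hx)]
      rw [h, h, h, ← TensorProduct.add_tmul, ← add_mul]; rfl
    · have h : ∀ c, pm (Function.update v (ea j) c) = (∏ s', (v (lg s') : S k n)) ⊗ₜ[k]
          ExteriorAlgebra.ιMulti k t (Function.update (fun j => mulW (v (ea j)) (v (eb j))) j (mulW c (v (eb j)))) := by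
        intro c
        unfold pm
        congr 2
        funext i
        by_cases hi : i = j
        · subst hi; simp
        · simp [hi]
      have h2 : mulW (a + b) (v (eb j)) = mulW a (v (eb j)) + mulW b (v (eb j)) := by
        apply Subtype.ext; simp [mulW, add_mul]
      rw [h, h, h, h2, AlternatingMap.map_update_add, TensorProduct.tmul_add]
    · have h : ∀ c, pm (Function.update v (eb j) c) = (∏ s', (v (lg s') : S k n)) ⊗ₜ[k]
          ExteriorAlgebra.ιMulti k t (Function.update (fun j => mulW (v (ea j)) (v (eb j))) j (mulW (v (ea j)) c)) := by
        intro c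
        unfold pm
        congr 2
        funext i
        by_cases hi : i = j
        · subst hi; simp
        · simp [hi]
      have h2 : mulW (v (ea j)) (a + b) = mulW (v (ea j)) a + mulW (v (ea j)) b := by
        apply Subtype.ext; simp [mulW, mul_add]
      rw [h, h, h, h2, AlternatingMap.map_update_add, TensorProduct.tmul_add]
  map_update_smul' := by
    intro dec v x a b
    have hd : dec = instDecidableEqSum := Subsingleton.elim _ _
    subst hd
    rcases x with s | j | j
    · have h : ∀ c, pm (Function.update v (lg s) c) = ((c : S k n) * ∏ s' ∈ Finset.univ.erase s, (v (lg s') : S k n)) ⊗ₜ[k]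
          ExteriorAlgebra.ιMulti k t (fun j => mulW (v (ea j)) (v (eb j))) := by
        intro c
        unfold pm
        rw [← Finset.mul_prod_erase _ _ (Finset.mem_univ s)]
        simp only [Function.update_self]
        congr 2
        refine Finset.prod_congr rfl fun x hx => ?_
        rw [Function.update_of_ne (by simpa using hx)]
      rw [h, h, TensorProduct.smul_tmul', ← smul_mul_assoc]; rfl
    · have h : ∀ c, pm (Function.update v (ea j) c) = (∏ s', (v (lg s') : S k n)) ⊗ₜ[k]
          ExteriorAlgebra.ιMulti k t (Function.update (fun j => mulW (v (ea j)) (v (eb j))) j (mulW c (v (eb j)))) := by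
        intro c
        unfold pm
        congr 2
        funext i
        by_cases hi : i = j
        · subst hi; simp
        · simp [hi]
      have h2 : mulW (a • b) (v (eb j)) = a • mulW b (v (eb j)) := by
        apply Subtype.ext; simp [mulW]
      rw [h, h, h2, AlternatingMap.map_update_smul, TensorProduct.tmul_smul]
    · have h : ∀ c, pm (Function.update v (eb j) c) = (∏ s', (v (lg s') : S k n)) ⊗ₜ[k]
          ExteriorAlgebra.ιMulti k t (Function.update (fun j => mulW (v (ea j)) (v (eb j))) j (mulW (v (ea j)) c)) := by
        intro c
        unfold pm
        congr 2
        funext i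
        by_cases hi : i = j
        · subst hi; simp
        · simp [hi]
      have h2 : mulW (v (ea j)) (a • b) = a • mulW (v (ea j)) b := by
        apply Subtype.ext; simp [mulW]
      rw [h, h, h2, AlternatingMap.map_update_smul, TensorProduct.tmul_smul]


variable (k) in
def sI {d : ℕ} (f : Fin d → Fin n) (I : Finset (Fin d)) (i : Fin n) : S1 k d :=
  ∑ l ∈ I.filter (fun l => f l = i), xv l

variable (k) in
def pol {d : ℕ} (f : Fin d → Fin n) : KK k n →ₗ[k] KK k d :=
  ∑ I : Finset (Fin d), ((-1 : k) ^ I.card) • (Phi (sI k f I)).toLinearMap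

lemma incl_excl {d : ℕ} (A : Finset (Fin d)) :
    ∑ I : Finset (Fin d), (if A ⊆ I then (-1 : k) ^ I.card else 0) =
      if A = Finset.univ then (-1 : k) ^ d else 0 := by
  have h := Finset.prod_add (fun _ : Fin d => (-1 : k)) (fun i => if i ∈ A then 0 else 1) Finset.univ
  rw [Finset.powerset_univ] at h
  have e : ∀ I : Finset (Fin d), (∏ a ∈ I, (-1 : k)) * ∏ a ∈ Finset.univ \ I, (if a ∈ A then (0 : k) else 1) =
      if A ⊆ I then (-1 : k) ^ I.card else 0 := by
    intro I
    split_ifs with hA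
    · rw [Finset.prod_const, Finset.prod_eq_one, mul_one]
      intro a ha
      rw [if_neg]
      intro h; exact (Finset.mem_sdiff.1 ha).2 (hA h)
    · obtain ⟨a, ha, ha'⟩ := Finset.not_subset.1 hA
      rw [Finset.prod_eq_zero (s := Finset.univ \ I) (i := a) (by simp [ha']) (by simp [ha]), mul_zero]
  rw [← Finset.sum_congr rfl fun I _ => e I, ← h]
  split_ifs with hA
  · subst hA; simp
  · have : ∃ a, a ∉ A := by
      by_contra hc; push Not at hc; exact hA (Finset.eq_univ_iff_forall.2 hc)
    obtain ⟨a, ha⟩ := this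
    exact Finset.prod_eq_zero (i := a) (Finset.mem_univ _) (by simp [ha])

lemma pol_pw {d r t : ℕ} (f : Fin d → Fin n) (w : J r t → Fin n) :
    pol k f (pw k w) = ((-1 : k) ^ d) •
      ∑ u : J r t → Fin d, if Function.Surjective u ∧ f ∘ u = w then pw k u else 0 := by
  classical
  have h1 : ∀ I : Finset (Fin d), Phi (sI k f I) (pw k w) =
      ∑ u : J r t → Fin d, if Finset.univ.image u ⊆ I ∧ f ∘ u = w then pw k u else 0 := by
    intro I
    rw [Phi_pw]
    have := (pmM (k := k) (n := d) r t).map_sum_finset (fun x l => xv l)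
      (fun x => I.filter (fun l => f l = w x))
    change pm (fun x => ∑ l ∈ I.filter (fun l => f l = w x), xv l) = _ at this
    change pm (fun x => ∑ l ∈ I.filter (fun l => f l = w x), xv l) = _
    rw [this, ← Finset.sum_filter]
    refine Finset.sum_congr ?_ fun u _ => rfl
    ext u
    simp only [Fintype.mem_piFinset, Finset.mem_filter, Finset.mem_univ, true_and,
      Finset.image_subset_iff, forall_const, funext_iff, Function.comp]
    exact forall_and
  simp only [pol, LinearMap.sum_apply, LinearMap.smul_apply, AlgHom.toLinearMap_apply, h1,
    Finset.smul_sum]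
  rw [Finset.sum_comm]
  refine Finset.sum_congr rfl fun u _ => ?_
  by_cases hu : f ∘ u = w
  · have e := incl_excl (k := k) (Finset.univ.image u)
    have e2 : Finset.univ.image u = Finset.univ ↔ Function.Surjective u := by
      rw [Finset.eq_univ_iff_forall]; simp [Function.Surjective]
    simp only [hu, and_true, e2] at e ⊢
    have : ∀ I : Finset (Fin d), ((-1 : k) ^ I.card) • (if Finset.univ.image u ⊆ I then pw k u else 0) =
        (if Finset.univ.image u ⊆ I then (-1 : k) ^ I.card else 0) • pw k u := by
      intro I; split_ifs <;> simp
    rw [Finset.sum_congr rfl fun I _ => this I, ← Finset.sum_smul, e]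
    split_ifs <;> simp
  · simp [hu]

variable (k) in
def Msub (d r t : ℕ) : Submodule k (KK k d) :=
  Submodule.span k (Set.range (fun β : J r t ≃ Fin d => pw k β))

variable (k n) in
def Wsub (r t : ℕ) : Submodule k (KK k n) :=
  Submodule.span k (Set.range (fun w : J r t → Fin n => pw k w))

lemma card_J (r t : ℕ) : Fintype.card (J r t) = r + 2 * t := by
  simp; ring

lemma surj_bij {r t : ℕ} {u : J r t → Fin (r + 2 * t)} (hu : Function.Surjective u) :
    Function.Bijective u := by
  rw [Fintype.bijective_iff_surjective_and_card]
  exact ⟨hu, by rw [card_J, Fintype.card_fin]⟩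

lemma pol_mem {r t : ℕ} (f : Fin (r + 2 * t) → Fin n) (c : KK k n) (hc : c ∈ Wsub k n r t) :
    pol k f c ∈ Msub k (r + 2 * t) r t := by
  induction hc using Submodule.span_induction with
  | mem x h =>
    obtain ⟨w, rfl⟩ := h
    simp only
    rw [pol_pw]
    refine Submodule.smul_mem _ _ (Submodule.sum_mem _ fun u _ => ?_)
    split_ifs with h
    · exact Submodule.subset_span ⟨Equiv.ofBijective u (surj_bij h.1), rfl⟩
    · exact zero_mem _
  | zero => simp
  | add x y _ _ hx hy => rw [map_add]; exact add_mem hx hy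
  | smul a x _ hx => rw [map_smul]; exact Submodule.smul_mem _ _ hx

lemma pol_dK [CharZero k] {d : ℕ} (f : Fin d → Fin n) (c : KK k n) :
    dK k d (pol k f c) = pol k f (dK k n c) := by
  simp only [pol, LinearMap.sum_apply, LinearMap.smul_apply, AlgHom.toLinearMap_apply, map_sum,
    map_smul, Phi_dK]

lemma sum_pol {r t : ℕ} (c : KK k n) (hc : c ∈ Wsub k n r t) :
    ∑ f : Fin (r + 2 * t) → Fin n, Fr k f (pol k f c) =
      (((-1 : k) ^ (r + 2 * t)) * (Finset.card (Finset.univ.filter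
        (fun u : J r t → Fin (r + 2 * t) => Function.Surjective u)) : k)) • c := by
  classical
  induction hc using Submodule.span_induction with
  | mem x h =>
    obtain ⟨w, rfl⟩ := h
    simp only
    have h1 : ∀ f : Fin (r + 2 * t) → Fin n, Fr k f (pol k f (pw k w)) =
       ((-1 : k) ^ (r + 2 * t)) •
      ∑ u : J r t → Fin (r + 2 * t), if Function.Surjective u ∧ f ∘ u = w then pw k w else 0 := by
      intro f
      rw [pol_pw, map_smul, map_sum]
      congr 1
      refine Finset.sum_congr rfl fun u _ => ?_
      split_ifs with h
      · rw [Fr_pw, h.2]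
      · simp
    rw [Finset.sum_congr rfl fun f _ => h1 f, ← Finset.smul_sum, mul_smul]
    congr 1
    rw [Finset.sum_comm, Nat.cast_smul_eq_nsmul, ← Finset.sum_const, Finset.sum_filter]
    refine Finset.sum_congr rfl fun u _ => ?_
    split_ifs with h
    · have hb := surj_bij h
      have : ∀ f : Fin (r + 2 * t) → Fin n, (Function.Surjective u ∧ f ∘ u = w) ↔
          f = w ∘ (Equiv.ofBijective u hb).symm := by
        intro f
        constructor
        · rintro ⟨-, rfl⟩
          funext x; simp [Equiv.ofBijective_apply_symm_apply]
        · rintro rfl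
          refine ⟨h, ?_⟩
          funext x; simp
      simp [this]
    · simp [h]
  | zero => simp
  | add x y _ _ hx hy => simp only [map_add, Finset.sum_add_distrib, hx, hy, smul_add]
  | smul a x _ hx => simp only [map_smul, ← Finset.smul_sum, hx]; rw [smul_comm]

lemma reduce_multilinear [CharZero k] {r t : ℕ}
    (core : ∀ v ∈ Msub k (r + 2 * t) r t, dK k _ v = 0 → v ∈ Bsub k (r + 2 * t) r t)
    (c : KK k n) (hc : c ∈ Wsub k n r t) (hd : dK k n c = 0) : c ∈ Bsub k n r t := by
  have h := sum_pol c hc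
  have h2 : ∑ f : Fin (r + 2 * t) → Fin n, Fr k f (pol k f c) ∈ Bsub k n r t := by
    refine Submodule.sum_mem _ fun f _ => Fr_Bsub f (core _ (pol_mem f c hc) ?_)
    rw [pol_dK, hd, map_zero]
  rw [h] at h2
  refine (Submodule.smul_mem_iff _ ?_).1 h2
  refine mul_ne_zero (by simp) ?_
  rw [Nat.cast_ne_zero, Finset.card_ne_zero]
  refine ⟨Fintype.equivOfCardEq (by rw [card_J, Fintype.card_fin]), ?_⟩
  simpa using (Equiv.surjective _)


/-! ### Peeling -/

variable (k) in
def sg {α : Type} [Fintype α] [DecidableEq α] (σ : Equiv.Perm α) : k := ((Equiv.Perm.sign σ : ℤ) : k)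

lemma Zs_pow_add (r s : ℕ) : (Zs k n) ^ (r + s) = (Zs k n) ^ r * (Zs k n) ^ s := by
  induction s with
  | zero => rw [Nat.add_zero, Submodule.pow_zero]; exact (Submodule.mul_one _).symm
  | succ s ih => rw [← add_assoc, Submodule.pow_succ, Submodule.pow_succ, ih]; exact mul_assoc (Zs k n ^ r) (Zs k n ^ s) (Zs k n)

lemma KK_zsmul (z : ℤ) (x : KK k n) : (z : k) • x = z • x := by
  have := Int.cast_smul_eq_zsmul k z x
  convert this

lemma sg_mul {α : Type} [Fintype α] [DecidableEq α] (σ τ : Equiv.Perm α) :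
    sg k (σ * τ) = sg k σ * sg k τ := by simp [sg]

lemma sg_sq {α : Type} [Fintype α] [DecidableEq α] (σ : Equiv.Perm α) :
    sg k σ * sg k σ = 1 := by
  rcases Int.units_eq_one_or (Equiv.Perm.sign σ) with h | h <;> simp [sg, h]

def theta {r r1 r2 t t1 t2 : ℕ} (er : Fin r1 ⊕ Fin r2 ≃ Fin r) (et : Fin t1 ⊕ Fin t2 ≃ Fin t) :
    J r1 t1 ⊕ J r2 t2 ≃ J r t :=
  (Equiv.sumSumSumComm (Fin r1) (Fin t1 ⊕ Fin t1) (Fin r2) (Fin t2 ⊕ Fin t2)).trans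
    (Equiv.sumCongr er ((Equiv.sumSumSumComm (Fin t1) (Fin t1) (Fin t2) (Fin t2)).trans
      (Equiv.sumCongr et et)))

lemma split_pw {r r1 r2 t t1 t2 : ℕ} (er : Fin r1 ⊕ Fin r2 ≃ Fin r) (et : Fin t1 ⊕ Fin t2 ≃ Fin t) :
    ∃ c : k, ∀ (n : ℕ) (w : J r t → Fin n), pw k w =
      c • (pw k (fun x => w (theta er et (Sum.inl x))) * pw k (fun x => w (theta er et (Sum.inr x)))) := by
  have ht : t = t1 + t2 := by
    have := Fintype.card_congr et; simpa using this.symm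
  subst ht
  set e' : Equiv.Perm (Fin (t1 + t2)) := finSumFinEquiv.symm.trans et
  refine ⟨sg k e', fun n w => ?_⟩
  unfold pw pm
  rw [Algebra.TensorProduct.tmul_mul_tmul, ExteriorAlgebra.ιMulti_mul_ιMulti]
  have h1 := (ExteriorAlgebra.ιMulti k (t1+t2) (M := S2 k n)).map_perm
    (fun j => mulW (xv (w (ea j))) (xv (w (eb j)))) e'
  have h2 : (fun j => mulW (xv (w (ea j))) (xv (w (eb j)))) ∘ e' = (Fin.append
      (fun j => mulW (xv (w (theta er et (Sum.inl (ea j))))) (xv (w (theta er et (Sum.inl (eb j))))) : Fin t1 → S2 k n)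
      (fun j => mulW (xv (w (theta er et (Sum.inr (ea j))))) (xv (w (theta er et (Sum.inr (eb j))))))) := by
    funext j
    refine Fin.addCases (fun i => ?_) (fun i => ?_) j
    · simp [e', theta]
    · simp [e', theta]
  rw [← h2, h1]
  have h3 : ∏ s, ((xv (w (lg s)) : S1 k n) : S k n) =
      (∏ s, ((xv (w (theta er et (Sum.inl (lg s)))) : S1 k n) : S k n)) *
      (∏ s, ((xv (w (theta er et (Sum.inr (lg s)))) : S1 k n) : S k n)) := by
    rw [← Equiv.prod_comp er, Fintype.prod_sum_type]; rfl
  rw [← h3]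
  have h4 : ∀ (ε : ℤˣ) (x : ExteriorAlgebra k (S2 k n)), ε • x = ((ε : ℤ) : k) • x := by
    intro ε x; rw [Int.cast_smul_eq_zsmul]; rfl
  rw [h4, TensorProduct.tmul_smul, smul_smul]
  change _ = (sg k e' * sg k e') • _
  rw [sg_sq, one_smul]

def lamJ {r t : ℕ} (l : Fin t → Fin r) : J r t → J r t
  | Sum.inl s => lg s
  | Sum.inr (Sum.inl j) => lg (l j)
  | Sum.inr (Sum.inr j) => eb j

variable (k) in
def Peel (r t : ℕ) (l : Fin t → Fin r) : Prop :=
  ∃ (Ω : Type) (_ : Fintype Ω) (_ : Nonempty Ω) (E : Ω → Equiv.Perm (J r t)),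
    (∀ ω x, lamJ l (E ω x) = lamJ l x) ∧
    ∀ (n : ℕ) (w : J r t → Fin n), ∑ ω, sg k (E ω) • pw k (w ∘ E ω) ∈ (Zs k n) ^ r

lemma peel_mul {r r1 r2 t t1 t2 : ℕ} (er : Fin r1 ⊕ Fin r2 ≃ Fin r) (et : Fin t1 ⊕ Fin t2 ≃ Fin t)
    (l : Fin t → Fin r) (l1 : Fin t1 → Fin r1) (l2 : Fin t2 → Fin r2)
    (h1 : ∀ j, l (et (Sum.inl j)) = er (Sum.inl (l1 j)))
    (h2 : ∀ j, l (et (Sum.inr j)) = er (Sum.inr (l2 j)))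
    (P1 : Peel k r1 t1 l1) (P2 : Peel k r2 t2 l2) : Peel k r t l := by
  obtain ⟨Ω1, _, _, E1, hE1, hP1⟩ := P1
  obtain ⟨Ω2, _, _, E2, hE2, hP2⟩ := P2
  obtain ⟨c, hc⟩ := split_pw (k := k) er et
  have hr : r = r1 + r2 := by
    have := Fintype.card_congr er; simpa using this.symm
  have g1 : ∀ x, lamJ l (theta er et (Sum.inl x)) = theta er et (Sum.inl (lamJ l1 x)) := by
    rintro (s | j | j)
    · rfl
    · change lg (l (et (Sum.inl j))) = lg (er (Sum.inl (l1 j))); rw [h1]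
    · rfl
  have g2 : ∀ x, lamJ l (theta er et (Sum.inr x)) = theta er et (Sum.inr (lamJ l2 x)) := by
    rintro (s | j | j)
    · rfl
    · change lg (l (et (Sum.inr j))) = lg (er (Sum.inr (l2 j))); rw [h2]
    · rfl
  refine ⟨Ω1 × Ω2, inferInstance, inferInstance,
    fun ω => (theta er et).permCongr (Equiv.Perm.sumCongr (E1 ω.1) (E2 ω.2)), ?_, ?_⟩
  · rintro ⟨ω1, ω2⟩ x
    obtain ⟨y, rfl⟩ := (theta er et).surjective x
    rcases y with y | y
    · simp [g1, hE1]
    · simp [g2, hE2]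
  · intro n w
    have e1 : ∀ ω : Ω1 × Ω2, sg k ((theta er et).permCongr (Equiv.Perm.sumCongr (E1 ω.1) (E2 ω.2))) •
        pw k (w ∘ (theta er et).permCongr (Equiv.Perm.sumCongr (E1 ω.1) (E2 ω.2))) =
        c • ((sg k (E1 ω.1) • pw k ((fun x => w (theta er et (Sum.inl x))) ∘ E1 ω.1)) *
          (sg k (E2 ω.2) • pw k ((fun x => w (theta er et (Sum.inr x))) ∘ E2 ω.2))) := by
      rintro ⟨ω1, ω2⟩
      rw [hc, smul_mul_smul_comm, smul_comm]
      have : sg k ((theta er et).permCongr (Equiv.Perm.sumCongr (E1 ω1) (E2 ω2))) =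
          sg k (E1 ω1) * sg k (E2 ω2) := by
        simp [sg]
      simp only [this]
      congr 3 <;> congr 1 <;> funext x <;> simp
    rw [Finset.sum_congr rfl fun ω _ => e1 ω, ← Finset.smul_sum, Fintype.sum_prod_type]
    simp only
    rw [← Finset.sum_mul_sum]
    have hz : (Zs k n) ^ r = (Zs k n) ^ r1 * (Zs k n) ^ r2 := by rw [hr, Zs_pow_add]
    rw [hz]
    exact Submodule.smul_mem _ _ (Submodule.mul_mem_mul (hP1 n _) (hP2 n _))

def kap (t : ℕ) : J 1 t ≃ Fin (t+1) ⊕ Fin t :=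
  (Equiv.sumAssoc (Fin 1) (Fin t) (Fin t)).symm.trans
    (Equiv.sumCongr ((Equiv.sumComm _ _).trans finSumFinEquiv) (Equiv.refl _))

lemma peel_one (t : ℕ) (l : Fin t → Fin 1) : Peel k 1 t l := by
  have k1 : ∀ s, kap t (lg s) = Sum.inl (Fin.last t) := by
    intro s; fin_cases s; rfl
  have k2 : ∀ j, kap t (ea j) = Sum.inl (Fin.castSucc j) := fun j => rfl
  have k3 : ∀ j, kap t (eb j) = Sum.inr j := fun j => rfl
  have k4 : ∀ i, lamJ l ((kap t).symm (Sum.inl i)) = lg 0 := by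
    intro i
    refine Fin.lastCases ?_ (fun j => ?_) i
    · rw [← k1 0, Equiv.symm_apply_apply]; rfl
    · rw [← k2, Equiv.symm_apply_apply]; exact congrArg Sum.inl (Subsingleton.elim _ _)
  have E3 : ∀ (σ : Equiv.Perm (Fin (t+1))) (j), (kap t).symm.permCongr (Equiv.Perm.sumCongr σ 1) (eb j) = eb j := by
    intro σ j
    simp only [Equiv.permCongr_apply, Equiv.symm_symm, k3]
    rw [Equiv.symm_apply_eq, k3]; rfl
  have E1 : ∀ (σ : Equiv.Perm (Fin (t+1))) (s), (kap t).symm.permCongr (Equiv.Perm.sumCongr σ 1) (lg s) =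
      (kap t).symm (Sum.inl (σ (Fin.last t))) := by
    intro σ s
    simp only [Equiv.permCongr_apply, Equiv.symm_symm, k1]; rfl
  have E2 : ∀ (σ : Equiv.Perm (Fin (t+1))) (j), (kap t).symm.permCongr (Equiv.Perm.sumCongr σ 1) (ea j) =
      (kap t).symm (Sum.inl (σ (Fin.castSucc j))) := by
    intro σ s
    simp only [Equiv.permCongr_apply, Equiv.symm_symm, k2]; rfl
  refine ⟨Equiv.Perm (Fin (t+1)), inferInstance, inferInstance,
    fun σ => (kap t).symm.permCongr (Equiv.Perm.sumCongr σ 1), ?_, ?_⟩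
  · rintro σ (s | j | j)
    · rw [E1, k4]; exact congrArg Sum.inl (Subsingleton.elim _ _)
    · rw [E2, k4]; exact congrArg Sum.inl (Subsingleton.elim _ _)
    · rw [E3]
  · intro n w
    have hz : (Zs k n) ^ 1 = Zs k n := Submodule.pow_one _
    rw [hz]
    refine Submodule.subset_span ⟨t, fun i => w ((kap t).symm (Sum.inl i)), fun j => w (eb j), ?_⟩
    unfold zel
    refine Finset.sum_congr rfl fun σ _ => ?_
    have : sg k ((kap t).symm.permCongr (Equiv.Perm.sumCongr σ 1)) = ((Equiv.Perm.sign σ : ℤ) : k) := by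
      simp [sg]
    rw [this, KK_zsmul]
    congr 1
    unfold pw pm
    simp only [Function.comp, E1, E2, E3]
    congr 1
    · simp
    · congr 1; funext j; rw [mulW_comm]

lemma peel_all (r t : ℕ) (l : Fin t → Fin r) : Peel k r t l := by
  induction r generalizing t with
  | zero =>
    obtain rfl : t = 0 := by
      rcases t with _ | t
      · rfl
      · exact (l 0).elim0
    refine ⟨Unit, inferInstance, inferInstance, fun _ => 1, fun _ _ => rfl, fun n w => ?_⟩
    have hz : (Zs k n) ^ 0 = 1 := Submodule.pow_zero _
    rw [hz]
    simp only [pw, pm]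
    simp [sg, ← Algebra.TensorProduct.one_def, Submodule.one_le.1 le_rfl]
  | succ r ih =>
    classical
    set A : Finset (Fin t) := Finset.univ.filter (fun j => l j ≠ Fin.last r) with hA
    have hm : ∀ j : Fin A.card, l (finSumEquivOfFinset (s := A) rfl rfl (Sum.inl j)) ≠ Fin.last r := by
      intro j
      rw [finSumEquivOfFinset_inl]
      have := A.orderEmbOfFin_mem rfl j
      exact (Finset.mem_filter.1 this).2
    have hm2 : ∀ j : Fin Aᶜ.card, l (finSumEquivOfFinset (s := A) rfl rfl (Sum.inr j)) = Fin.last r := by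
      intro j
      rw [finSumEquivOfFinset_inr]
      have := Aᶜ.orderEmbOfFin_mem rfl j
      rw [Finset.mem_compl] at this
      by_contra hc
      exact this (Finset.mem_filter.2 ⟨Finset.mem_univ _, hc⟩)
    refine peel_mul (r1 := r) (r2 := 1) finSumFinEquiv (finSumEquivOfFinset (s := A) rfl rfl) l
      (fun j => (l (finSumEquivOfFinset (s := A) rfl rfl (Sum.inl j))).castPred (hm j)) (fun _ => 0) ?_ ?_ (ih _ _) (peel_one _ _)
    · intro j
      simp [Fin.ext_iff]
    · intro j
      rw [hm2]; simp [Fin.ext_iff]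


/-! ### Counting -/

lemma sq_le_sum_odd (T : Finset ℕ) : (T.card : ℤ) ^ 2 ≤ ∑ y ∈ T, (2 * (y : ℤ) + 1) ∧
    ((T.card : ℤ) ^ 2 = ∑ y ∈ T, (2 * (y : ℤ) + 1) → T = Finset.range T.card) := by
  induction T using Finset.induction_on_max with
  | empty => simp
  | insert a T h ih =>
    have ha : a ∉ T := fun h' => lt_irrefl _ (h a h')
    have hc : T.card ≤ a := by
      have : T ⊆ Finset.range a := fun x hx => Finset.mem_range.2 (h x hx)
      simpa using Finset.card_le_card this
    have hc' : (T.card : ℤ) ≤ a := by exact_mod_cast hc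
    rw [Finset.sum_insert ha, Finset.card_insert_of_notMem ha]
    push_cast
    refine ⟨by nlinarith [ih.1], fun he => ?_⟩
    have e1 : (T.card : ℤ) = a := by nlinarith [ih.1]
    have e2 : T.card = a := by exact_mod_cast e1
    have e3 := ih.2 (by nlinarith [ih.1])
    rw [Finset.range_add_one, ← e3, e2]

lemma count_legs {Xt : Type} [Fintype Xt] [DecidableEq Xt] (i : Equiv.Perm Xt) (hi : ∀ x, i (i x) = x)
    (h : Xt → ℕ) (inj : ∀ x y, h x = h y → h (i x) = h (i y) → x = y)
    (hk : ∑ x, (2 * (h x : ℤ) + 1 - (Finset.card (Finset.univ.filter (fun y => h y = h x)) : ℤ)) = 0)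
    (x : Xt) (hx : h x < h (i x)) : ∃ y, h y = h x ∧ i y = y := by
  set c : ℕ → ℕ := fun m => Finset.card (Finset.univ.filter (fun y => h y = m)) with hc
  set T : ℕ → Finset ℕ := fun m => (Finset.univ.filter (fun y => h y = m)).image (fun y => h (i y)) with hT
  have injOn : ∀ m, Set.InjOn (fun y => h (i y)) (Finset.univ.filter (fun y => h y = m) : Finset Xt) := by
    intro m y hy z hz hyz
    simp only [Finset.coe_filter, Finset.mem_univ, true_and, Set.mem_ofPred_eq] at hy hz
    exact inj y z (hy.trans hz.symm) hyz
  have cT : ∀ m, (T m).card = c m := fun m => Finset.card_image_of_injOn (injOn m)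
  have sT : ∀ m, ∑ y ∈ T m, (2 * (y : ℤ) + 1) = ∑ x ∈ Finset.univ.filter (fun y => h y = m), (2 * (h (i x) : ℤ) + 1) :=
    fun m => Finset.sum_image (injOn m)
  have h1 : ∑ x, (2 * (h (i x) : ℤ) + 1 - (c (h x) : ℤ)) = 0 := by
    rw [← hk, Finset.sum_sub_distrib, Finset.sum_sub_distrib]
    congr 1
    exact Equiv.sum_comp i (fun x => 2 * (h x : ℤ) + 1)
  rw [← Finset.sum_fiberwise_of_maps_to (t := Finset.univ.image h) (g := h) (fun x _ => Finset.mem_image_of_mem _ (Finset.mem_univ _))] at h1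
  have h2 : ∀ m, ∑ x ∈ Finset.univ.filter (fun y => h y = m), (2 * (h (i x) : ℤ) + 1 - (c (h x) : ℤ)) =
      ∑ y ∈ T m, (2 * (y : ℤ) + 1) - ((T m).card : ℤ) ^ 2 := by
    intro m
    rw [Finset.sum_sub_distrib, sT, cT]
    congr 1
    rw [Finset.sum_congr rfl (g := fun _ => (c m : ℤ)) (fun x hx => by rw [(Finset.mem_filter.1 hx).2])]
    simp [hc, sq]
  simp only [h2] at h1
  rw [Finset.sum_eq_zero_iff_of_nonneg (fun m _ => sub_nonneg.2 (sq_le_sum_odd (T m)).1)] at h1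
  have h3 := (sq_le_sum_odd (T (h x))).2 (sub_eq_zero.1 (h1 (h x) (Finset.mem_image_of_mem _ (Finset.mem_univ _)))).symm
  have m1 : h (i x) ∈ T (h x) := Finset.mem_image.2 ⟨x, by simp, rfl⟩
  have m2 : h x ∈ T (h x) := by
    rw [h3, Finset.mem_range] at m1 ⊢
    omega
  obtain ⟨y, hy, hy2⟩ := Finset.mem_image.1 m2
  have hy1 : h y = h x := (Finset.mem_filter.1 hy).2
  refine ⟨y, hy1, ?_⟩
  exact inj _ _ (hy2.trans hy1.symm) (by rw [hi, hy1]; exact hy2.symm)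

/-! ### Alternating sums -/

def invJ (r t : ℕ) : Equiv.Perm (J r t) :=
  Equiv.sumCongr (Equiv.refl _) (Equiv.sumComm _ _)

def GG {r t : ℕ} (h : J r t → ℕ) : Finset (Equiv.Perm (J r t)) :=
  Finset.univ.filter (fun τ => ∀ x, h (τ x) = h x)

variable (k) in
def altJ {r t : ℕ} (h : J r t → ℕ) (w : J r t → Fin n) : KK k n :=
  ∑ τ ∈ GG h, sg k τ • pw k (w ∘ τ)

lemma altJ_shift {r t : ℕ} (h : J r t → ℕ) (w : J r t → Fin n) (τ0 : Equiv.Perm (J r t)) (h0 : ∀ x, h (τ0 x) = h x) :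
    altJ k h w = ∑ τ ∈ GG h, sg k τ • (sg k τ0 • pw k ((w ∘ τ) ∘ τ0)) := by
  unfold altJ
  symm
  refine Finset.sum_equiv (Equiv.mulRight τ0) ?_ ?_
  · intro τ
    simp only [GG, Finset.mem_filter, Finset.mem_univ, true_and, Equiv.coe_mulRight, Equiv.Perm.mul_apply]
    constructor
    · intro hh x; rw [hh, h0]
    · intro hh x
      obtain ⟨y, rfl⟩ := τ0.surjective x
      rw [hh, h0]
  · intro τ _
    rw [smul_smul, Equiv.coe_mulRight, sg_mul]
    rfl

lemma altJ_zero [CharZero k] {r t : ℕ} (h : J r t → ℕ) (w : J r t → Fin n) (τ0 : Equiv.Perm (J r t))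
    (h0 : ∀ x, h (τ0 x) = h x) (hp : ∀ u : J r t → Fin n, sg k τ0 • pw k (u ∘ τ0) = - pw k u) : altJ k h w = 0 := by
  have := altJ_shift (k := k) h w τ0 h0
  simp only [hp, smul_neg, Finset.sum_neg_distrib] at this
  change altJ k h w = - altJ k h w at this
  have h2 : (2 : k) • altJ k h w = 0 := by
    rw [two_smul]; nth_rewrite 1 [this]; simp
  exact (smul_eq_zero.1 h2).resolve_left two_ne_zero

lemma pm_edge2 {r t : ℕ} (v : J r t → S1 k n) (j j' : Fin t) (hj : j ≠ j') :
    pm (v ∘ (Equiv.swap (ea j) (eb j') * Equiv.swap (eb j) (ea j') : Equiv.Perm (J r t))) = - pm v := by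
  apply pm_eq_neg _ _ j j' hj
  · intro s; simp [Equiv.swap_apply_def]
  · intro i
    by_cases h1 : i = j
    · subst h1; simp [Equiv.swap_apply_def, hj, hj.symm, mulW_comm (v (eb j'))]
    · by_cases h2 : i = j'
      · subst h2; simp [Equiv.swap_apply_def, h1, hj, mulW_comm (v (eb j))]
      · simp [Equiv.swap_apply_def, h1, h2]

lemma swap_inv {α : Type} [DecidableEq α] (h : α → ℕ) {x y : α} (hxy : h x = h y) (z : α) :
    h (Equiv.swap x y z) = h z := by
  rw [Equiv.swap_apply_def]
  split_ifs with h1 h2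
  · rw [h1, hxy]
  · rw [h2, hxy]
  · rfl

lemma sg_swap {α : Type} [Fintype α] [DecidableEq α] {x y : α} (hxy : x ≠ y) : sg k (Equiv.swap x y) = -1 := by
  simp [sg, Equiv.Perm.sign_swap hxy]

lemma KK_neg_one (x : KK k n) : (-1 : k) • x = - x := by module

lemma altJ_edge_zero [CharZero k] {r t : ℕ} (h : J r t → ℕ) (w : J r t → Fin n) (j : Fin t)
    (hj : h (ea j) = h (eb j)) : altJ k h w = 0 := by
  refine altJ_zero h w (Equiv.swap (ea j) (eb j)) (swap_inv h hj) fun u => ?_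
  rw [sg_swap (by simp), KK_neg_one]
  congr 1
  exact pm_flip (fun x => xv (u x)) j

lemma altJ_noninj [CharZero k] {r t : ℕ} (h : J r t → ℕ) (w : J r t → Fin n) (x y : J r t) (hne : x ≠ y)
    (h1 : h x = h y) (h2 : h (invJ r t x) = h (invJ r t y)) : altJ k h w = 0 := by
  have A1 : ∀ j j' : Fin t, j ≠ j' → h (ea j) = h (ea j') → h (eb j) = h (eb j') → altJ k h w = 0 := by
    intro j j' hj e1 e2
    refine altJ_zero h w (Equiv.swap (ea j) (ea j') * Equiv.swap (eb j) (eb j')) (fun z => ?_) fun u => ?_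
    · rw [Equiv.Perm.mul_apply, swap_inv h e1, swap_inv h e2]
    · rw [sg_mul, sg_swap (by simpa using hj), sg_swap (by simpa using hj), neg_one_mul, neg_neg, one_smul]
      exact pm_edge (fun x => xv (u x)) j j' hj
  have A2 : ∀ j j' : Fin t, j ≠ j' → h (ea j) = h (eb j') → h (eb j) = h (ea j') → altJ k h w = 0 := by
    intro j j' hj e1 e2
    refine altJ_zero h w (Equiv.swap (ea j) (eb j') * Equiv.swap (eb j) (ea j')) (fun z => ?_) fun u => ?_
    · rw [Equiv.Perm.mul_apply, swap_inv h e1, swap_inv h e2]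
    · rw [sg_mul, sg_swap (by simp), sg_swap (by simp), neg_one_mul, neg_neg, one_smul]
      exact pm_edge2 (fun x => xv (u x)) j j' hj
  have i1 : ∀ s, invJ r t (lg s) = lg s := fun _ => rfl
  have i2 : ∀ j, invJ r t (ea j) = eb j := fun _ => rfl
  have i3 : ∀ j, invJ r t (eb j) = ea j := fun _ => rfl
  rcases x with s | j | j <;> rcases y with s' | j' | j' <;>
    simp only [i1, i2, i3] at h2
  · refine altJ_zero h w (Equiv.swap (lg s) (lg s')) (swap_inv h h1) fun u => ?_
    rw [sg_swap hne, KK_neg_one]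
    congr 1
    exact pm_leg (fun x => xv (u x)) s s'
  · exact altJ_edge_zero h w j' (h1.symm.trans h2)
  · exact altJ_edge_zero h w j' (h2.symm.trans h1)
  · exact altJ_edge_zero h w j (h1.trans h2.symm)
  · exact A1 j j' (by simpa using hne) h1 h2
  · by_cases hj : j = j'
    · subst hj; exact altJ_edge_zero h w j h1
    · exact A2 j j' hj h1 h2
  · exact altJ_edge_zero h w j (h2.trans h1.symm)
  · by_cases hj : j = j'
    · subst hj; exact altJ_edge_zero h w j h2
    · exact A2 j j' hj h2 h1
  · exact A1 j j' (by simpa using hne) h2 h1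

lemma flip_exists {r t : ℕ} (h : J r t → ℕ) : ∃ th : Equiv.Perm (J r t),
    (∀ x, th (th x) = x) ∧ (∀ s, th (lg s) = lg s) ∧
    (∀ j, (th (ea j) = ea j ∧ th (eb j) = eb j ∧ h (ea j) ≤ h (eb j)) ∨
      (th (ea j) = eb j ∧ th (eb j) = ea j ∧ h (eb j) ≤ h (ea j))) := by
  classical
  let f : J r t → J r t := fun x => match x with
    | Sum.inl s => lg s
    | Sum.inr (Sum.inl j) => if h (ea j) ≤ h (eb j) then ea j else eb j
    | Sum.inr (Sum.inr j) => if h (ea j) ≤ h (eb j) then eb j else ea j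
  have hf : Function.Involutive f := by
    rintro (s | j | j)
    · rfl
    · by_cases hj : h (ea j) ≤ h (eb j) <;> simp [f, hj]
    · by_cases hj : h (ea j) ≤ h (eb j) <;> simp [f, hj]
  refine ⟨hf.toPerm, hf, fun _ => rfl, fun j => ?_⟩
  by_cases hj : h (ea j) ≤ h (eb j)
  · left
    exact ⟨if_pos hj, if_pos hj, hj⟩
  · right
    exact ⟨if_neg hj, if_neg hj, le_of_not_ge hj⟩

theorem altLemma [CharZero k] {r t : ℕ} (h : J r t → ℕ) (w : J r t → Fin n)
    (hk : ∑ x, (2 * (h x : ℤ) + 1 - (Finset.card (Finset.univ.filter (fun y => h y = h x)) : ℤ)) = 0) :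
    altJ k h w ∈ (Zs k n) ^ r := by
  by_cases inj : ∀ x y, h x = h y → h (invJ r t x) = h (invJ r t y) → x = y
  swap
  · push Not at inj
    obtain ⟨x, y, h1, h2, h3⟩ := inj
    rw [altJ_noninj h w x y h3 h1 h2]; exact zero_mem _
  have hinv : ∀ x, invJ r t (invJ r t x) = x := by
    rintro (s | j | j) <;> rfl
  have legs := count_legs (invJ r t) hinv h inj hk
  have legs' : ∀ x, h x < h (invJ r t x) → ∃ s, h (lg s) = h x := by
    intro x hx
    obtain ⟨y, hy1, hy2⟩ := legs x hx
    rcases y with s | j | j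
    · exact ⟨s, hy1⟩
    · simp [invJ] at hy2
    · simp [invJ] at hy2
  have hne : ∀ j, h (ea j) ≠ h (eb j) := by
    intro j hj
    have := inj (ea j) (eb j) hj hj.symm
    simp at this
  obtain ⟨th, th2, thl, the⟩ := flip_exists h
  have hl : ∀ j, ∃ s, h (lg s) = h (th (ea j)) := by
    intro j
    rcases the j with ⟨e1, e2, e3⟩ | ⟨e1, e2, e3⟩
    · rw [e1]; exact legs' _ (lt_of_le_of_ne e3 (hne j))
    · rw [e1]; exact legs' _ (lt_of_le_of_ne e3 (hne j).symm)
  choose l hl using hl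
  have pth : ∀ u : J r t → Fin n, pw k (u ∘ th) = pw k u := by
    intro u
    unfold pw pm
    congr 1
    · simp [thl]
    · congr 1
      funext j
      rcases the j with ⟨e1, e2, -⟩ | ⟨e1, e2, -⟩
      · simp [e1, e2]
      · simp [e1, e2, mulW_comm]
  obtain ⟨Ω, _, _, E, hE, hP⟩ := peel_all (k := k) r t l
  have hlam : ∀ x, h (th (lamJ l x)) = h (th x) := by
    rintro (s | j | j)
    · rfl
    · simp only [lamJ]; rw [thl, hl]
    · rfl
  have hE' : ∀ ω x, h ((th * E ω * th) x) = h x := by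
    intro ω x
    simp only [Equiv.Perm.mul_apply]
    rw [← hlam, hE, hlam, th2]
  have h1 : ∀ ω, altJ k h w = ∑ τ ∈ GG h, sg k τ • (sg k (E ω) • pw k (((w ∘ τ) ∘ th) ∘ E ω)) := by
    intro ω
    rw [altJ_shift h w _ (hE' ω)]
    refine Finset.sum_congr rfl fun τ _ => ?_
    have e1 : sg k (th * E ω * th) = sg k (E ω) := by
      rw [sg_mul, sg_mul, mul_comm, ← mul_assoc, sg_sq, one_mul]
    rw [e1]
    congr 2
    exact pth (((w ∘ τ) ∘ th) ∘ E ω)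
  have h2 : (Fintype.card Ω : k) • altJ k h w = ∑ τ ∈ GG h, sg k τ • ∑ ω, (sg k (E ω) • pw k (((w ∘ τ) ∘ th) ∘ E ω)) := by
    simp only [Finset.smul_sum]
    rw [Finset.sum_comm, ← Finset.sum_congr rfl fun ω _ => h1 ω, Finset.sum_const, Finset.card_univ,
      Nat.cast_smul_eq_nsmul]
  refine (Submodule.smul_mem_iff _ (s := (Fintype.card Ω : k)) (by simp)).1 ?_
  rw [h2]
  exact Submodule.sum_mem _ fun τ _ => Submodule.smul_mem _ _ (hP n _)


/-! ### Core induction -/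

lemma Fr_Msub {d r t : ℕ} (σ : Equiv.Perm (Fin d)) {v : KK k d} (hv : v ∈ Msub k d r t) :
    Fr k σ v ∈ Msub k d r t := by
  induction hv using Submodule.span_induction with
  | mem x h =>
    obtain ⟨β, rfl⟩ := h
    simp only
    rw [Fr_pw]
    exact Submodule.subset_span ⟨β.trans σ, rfl⟩
  | zero => simp
  | add x y _ _ hx hy => rw [map_add]; exact add_mem hx hy
  | smul a x _ hx => rw [map_smul]; exact Submodule.smul_mem _ _ hx

lemma Fr_Fr {d r t : ℕ} (σ τ : Equiv.Perm (Fin d)) {v : KK k d} (hv : v ∈ Msub k d r t) :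
    Fr k σ (Fr k τ v) = Fr k (σ * τ : Equiv.Perm (Fin d)) v := by
  induction hv using Submodule.span_induction with
  | mem x h =>
    obtain ⟨β, rfl⟩ := h
    simp only
    rw [Fr_pw, Fr_pw, Fr_pw]
    rfl
  | zero => simp
  | add x y _ _ hx hy => simp only [map_add, hx, hy]
  | smul a x _ hx => simp only [map_smul, hx]

lemma Fr_one {d r t : ℕ} {v : KK k d} (hv : v ∈ Msub k d r t) :
    Fr k (1 : Equiv.Perm (Fin d)) v = v := by
  induction hv using Submodule.span_induction with
  | mem x h =>
    obtain ⟨β, rfl⟩ := h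
    simp only
    rw [Fr_pw]
    rfl
  | zero => simp
  | add x y _ _ hx hy => simp only [map_add, hx, hy]
  | smul a x _ hx => simp only [map_smul, hx]

lemma Fr_dK [CharZero k] {N : ℕ} (f : Fin n → Fin N) (v : KK k n) :
    dK k N (Fr k f v) = Fr k f (dK k n v) := (Phi_dK _ _).symm

lemma pw_Kt {r t : ℕ} (w : J r t → Fin n) : pw k w ∈ Kt k n t := by
  rw [Kt_span]; exact Submodule.subset_span ⟨_, _, rfl⟩

lemma Msub_Kt {d r t : ℕ} : Msub k d r t ≤ Kt k d t := by
  rw [Msub, Submodule.span_le]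
  rintro _ ⟨β, rfl⟩
  exact pw_Kt _

lemma dl_Kt {t : ℕ} {v : KK k n} (hv : v ∈ Kt k n t) : dl k n v ∈ Kt k n (t + 1) := by
  rw [Kt_span] at hv
  induction hv using Submodule.span_induction with
  | mem x h =>
    obtain ⟨f, m, rfl⟩ := h
    rw [dl_tmul]
    refine Submodule.sum_mem _ fun i _ => Submodule.sum_mem _ fun l _ => ?_
    rw [Kt_span]
    refine Submodule.subset_span ⟨pderiv i (pderiv l f), (Fin.cons (q i l) m : Fin (t+1) → S2 k n), ?_⟩
    rw [ιM_succ]; rfl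
  | zero => simp
  | add x y _ _ hx hy => rw [map_add]; exact add_mem hx hy
  | smul a x _ hx => rw [map_smul]; exact Submodule.smul_mem _ _ hx

lemma lap_M [CharZero k] {d r t : ℕ} {v : KK k d} (hv : v ∈ Msub k d r t) :
    dK k d (dl k d v) + dl k d (dK k d v) =
      ∑ b : Fin d, ∑ l : Fin d, Fr k (Equiv.swap l b) v - ((r + 2 * t : ℕ) : k) • v := by
  induction hv using Submodule.span_induction with
  | mem x h =>
    obtain ⟨β, rfl⟩ := h
    simp only
    rw [lap_word]
    congr 1
    rw [← Equiv.sum_comp β]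
    refine Finset.sum_congr rfl fun x _ => ?_
    rw [← Equiv.sum_comp β]
    refine Finset.sum_congr rfl fun y _ => ?_
    rw [Fr_pw]
    congr 1
    funext z
    simp only [Function.comp]
    rw [Equiv.swap_comm x y]
    simp only [Equiv.swap_apply_def, β.injective.eq_iff]
    split_ifs <;> rfl
  | zero => simp
  | add x y _ _ hx hy =>
    simp only [map_add, Finset.sum_add_distrib, smul_add]
    rw [add_add_add_comm, hx, hy]; abel
  | smul a x _ hx =>
    simp only [map_smul, ← Finset.smul_sum]
    rw [← smul_add, hx, smul_sub, smul_comm]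


lemma anti_key {d r t : ℕ} (g : Fin d → ℕ) {v : KK k d} (hv : v ∈ Msub k d r t)
    (ha : ∀ l l', l ≠ l' → g l = g l' → Fr k (Equiv.swap l l') v = -v) (b a0 : Fin d) (i : ℕ)
    (hi : i < g b) (h0 : g a0 = i) :
    Fr k (Equiv.swap a0 b) (v - ∑ a ∈ Finset.univ.filter (fun a => g a = i), Fr k (Equiv.swap a b) v)
      = -(v - ∑ a ∈ Finset.univ.filter (fun a => g a = i), Fr k (Equiv.swap a b) v) := by
  have hmem : a0 ∈ Finset.univ.filter (fun a => g a = i) := by simp [h0]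
  rw [map_sub, map_sum, ← Finset.add_sum_erase _ _ hmem, ← Finset.add_sum_erase _ _ hmem]
  have h1 : Fr k (Equiv.swap a0 b) (Fr k (Equiv.swap a0 b) v) = v := by
    rw [Fr_Fr _ _ hv, Equiv.swap_mul_self, Fr_one hv]
  have h2 : ∑ a ∈ (Finset.univ.filter (fun a => g a = i)).erase a0,
      Fr k (Equiv.swap a0 b) (Fr k (Equiv.swap a b) v) =
      - ∑ a ∈ (Finset.univ.filter (fun a => g a = i)).erase a0, Fr k (Equiv.swap a b) v := by
    rw [← Finset.sum_neg_distrib]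
    refine Finset.sum_congr rfl fun a ham => ?_
    simp only [Finset.mem_erase, Finset.mem_filter, Finset.mem_univ, true_and] at ham
    have hab : a0 ≠ b := by rintro rfl; omega
    have e : Equiv.swap a0 b * Equiv.swap a b = Equiv.swap a b * Equiv.swap a0 a := by
      rw [Equiv.mul_swap_eq_swap_mul (Equiv.swap a b), Equiv.swap_apply_left,
        Equiv.swap_apply_of_ne_of_ne ham.1.symm hab]
    rw [Fr_Fr _ _ hv, e, ← Fr_Fr _ _ hv, ha a0 a ham.1.symm (by rw [h0, ham.2]), map_neg]
  rw [h1, h2]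
  abel

lemma anti_step {d r t : ℕ} (g : Fin d → ℕ) {v : KK k d} (hv : v ∈ Msub k d r t)
    (ha : ∀ l l', l ≠ l' → g l = g l' → Fr k (Equiv.swap l l') v = -v) (b : Fin d) (i : ℕ)
    (hi : i < g b) (l l' : Fin d) (hl : l ≠ l')
    (hg : Function.update g b i l = Function.update g b i l') :
    Fr k (Equiv.swap l l') (v - ∑ a ∈ Finset.univ.filter (fun a => g a = i), Fr k (Equiv.swap a b) v)
      = -(v - ∑ a ∈ Finset.univ.filter (fun a => g a = i), Fr k (Equiv.swap a b) v) := by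
  by_cases h1 : l = b
  · subst h1
    rw [Function.update_self, Function.update_of_ne hl.symm] at hg
    rw [Equiv.swap_comm]
    exact anti_key g hv ha l l' i hi hg.symm
  by_cases h2 : l' = b
  · subst h2
    rw [Function.update_self, Function.update_of_ne hl] at hg
    exact anti_key g hv ha l' l i hi hg
  rw [Function.update_of_ne h1, Function.update_of_ne h2] at hg
  rw [map_sub, map_sum, ha l l' hl hg]
  have : ∑ a ∈ Finset.univ.filter (fun a => g a = i), Fr k (Equiv.swap l l') (Fr k (Equiv.swap a b) v)
      = - ∑ a ∈ Finset.univ.filter (fun a => g a = i), Fr k (Equiv.swap a b) v := by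
    rw [← Finset.sum_neg_distrib]
    refine Finset.sum_equiv (Equiv.swap l l') ?_ ?_
    · intro a
      simp only [Finset.mem_filter, Finset.mem_univ, true_and]
      rw [swap_inv g hg]
    · intro a _
      rw [Fr_Fr _ _ hv, Equiv.mul_swap_eq_swap_mul, Equiv.swap_apply_of_ne_of_ne (a := l) (b := l') (x := b) (Ne.symm h1) (Ne.symm h2),
        ← Fr_Fr _ _ hv, ha l l' hl hg, map_neg]
  rw [this]
  abel

lemma lin_count {M : Type} [AddCommGroup M] {d : ℕ} (g : Fin d → ℕ) (T : Fin d → Fin d → M) (p : M)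
    (hs : ∀ l b, T l b = T b l) (h1 : ∀ b i, i < g b → ∑ l ∈ Finset.univ.filter (fun l => g l = i), T l b = p)
    (h2 : ∀ b, T b b = p) (h3 : ∀ l b, l ≠ b → g l = g b → T l b = - p) :
    ∑ b, ∑ l, T l b = (∑ b, (2 * (g b : ℤ) + 2 - (Finset.card (Finset.univ.filter (fun y => g y = g b)) : ℤ))) • p := by
  have hlt : ∀ b, ∑ l ∈ Finset.univ.filter (fun l => g l < g b), T l b = (g b : ℤ) • p := by
    intro b
    rw [← Finset.sum_fiberwise_of_maps_to (t := Finset.range (g b)) (g := g)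
      (fun x hx => by simpa using hx)]
    rw [Finset.sum_congr rfl (g := fun _ => p)]
    · simp
    · intro i hi
      rw [Finset.mem_range] at hi
      rw [← h1 b i hi]
      refine Finset.sum_congr ?_ fun _ _ => rfl
      ext l
      simp only [Finset.mem_filter, Finset.mem_univ, true_and]
      omega
  have heq : ∀ b, ∑ l ∈ Finset.univ.filter (fun l => g l = g b), T l b =
      (2 - (Finset.card (Finset.univ.filter (fun y => g y = g b)) : ℤ)) • p := by
    intro b
    have hb : b ∈ Finset.univ.filter (fun l => g l = g b) := by simp
    rw [← Finset.add_sum_erase _ _ hb, h2, Finset.sum_congr rfl (g := fun _ => -p)]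
    · rw [Finset.sum_const, ← Finset.card_erase_add_one hb]
      push_cast
      rw [← natCast_zsmul]
      module
    · intro l hl
      simp only [Finset.mem_erase, Finset.mem_filter, Finset.mem_univ, true_and] at hl
      exact h3 l b hl.1 hl.2
  have hsplit : ∀ b, ∑ l, T l b = ∑ l ∈ Finset.univ.filter (fun l => g l < g b), T l b +
      ∑ l ∈ Finset.univ.filter (fun l => g l = g b), T l b +
      ∑ l ∈ Finset.univ.filter (fun l => g b < g l), T l b := by
    intro b
    simp only [Finset.sum_filter, ← Finset.sum_add_distrib]
    refine Finset.sum_congr rfl fun l _ => ?_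
    rcases lt_trichotomy (g l) (g b) with h | h | h
    · simp [h, h.ne, h.not_gt]
    · simp [h]
    · simp [h, h.ne', h.not_gt]
  have hgt : ∑ b, ∑ l ∈ Finset.univ.filter (fun l => g b < g l), T l b =
      ∑ b, ∑ l ∈ Finset.univ.filter (fun l => g l < g b), T l b := by
    simp only [Finset.sum_filter]
    rw [Finset.sum_comm]
    refine Finset.sum_congr rfl fun l _ => Finset.sum_congr rfl fun b _ => ?_
    rw [hs]
  rw [Finset.sum_congr rfl fun b _ => hsplit b]
  simp only [Finset.sum_add_distrib, hgt]
  simp only [hlt, heq, ← Finset.sum_smul, ← add_smul]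
  congr 1
  simp only [← Finset.sum_add_distrib]
  refine Finset.sum_congr rfl fun b _ => ?_
  ring

lemma anti_sign {d r t : ℕ} (g : Fin d → ℕ) {v : KK k d} (hv : v ∈ Msub k d r t)
    (ha : ∀ l l', l ≠ l' → g l = g l' → Fr k (Equiv.swap l l') v = -v) :
    ∀ (N : ℕ) (σ : Equiv.Perm (Fin d)), σ.support.card = N → (∀ x, g (σ x) = g x) →
      Fr k σ v = sg k σ • v := by
  intro N
  induction N using Nat.strong_induction_on with
  | _ N ih =>
    intro σ hN hσ
    by_cases h1 : σ = 1
    · subst h1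
      rw [Fr_one hv]
      simp [sg]
    · obtain ⟨x, hx⟩ : ∃ x, σ x ≠ x := by
        by_contra hcon
        push Not at hcon
        exact h1 (Equiv.ext hcon)
      have hlt := Equiv.Perm.card_support_swap_mul hx
      have hinv : ∀ y, g ((Equiv.swap x (σ x) * σ) y) = g y := by
        intro y
        rw [Equiv.Perm.mul_apply, swap_inv g (hσ x).symm, hσ]
      have := ih _ (by rw [← hN]; exact hlt) (Equiv.swap x (σ x) * σ) rfl hinv
      have e : σ = Equiv.swap x (σ x) * (Equiv.swap x (σ x) * σ) := by
        rw [← mul_assoc, Equiv.swap_mul_self, one_mul]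
      have e1 : Fr k σ v = Fr k (Equiv.swap x (σ x)) (Fr k (Equiv.swap x (σ x) * σ : Equiv.Perm (Fin d)) v) := by
        rw [Fr_Fr _ _ hv, ← e]
      rw [e1, this, map_smul, ha _ _ (Ne.symm hx) (hσ x).symm, sg_mul, sg_swap (Ne.symm hx)]
      module

lemma avg_mem [CharZero k] {d r t : ℕ} (g : Fin d → ℕ)
    (hk : ∑ x, (2*(g x:ℤ)+1 - (Finset.card (Finset.univ.filter (fun y => g y = g x)) : ℤ)) = 0)
    {v : KK k d} (hv : v ∈ Msub k d r t) :
    ∑ σ ∈ Finset.univ.filter (fun σ : Equiv.Perm (Fin d) => ∀ x, g (σ x) = g x),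
      sg k σ • Fr k σ v ∈ (Zs k d) ^ r := by
  induction hv using Submodule.span_induction with
  | mem x h =>
    obtain ⟨β, rfl⟩ := h
    simp only
    have := altLemma (k := k) (fun x => g (β x)) (β : J r t → Fin d) (by
      rw [← hk, ← Equiv.sum_comp β]
      refine Finset.sum_congr rfl fun x _ => ?_
      congr 2
      refine Finset.card_equiv β fun y => ?_
      simp)
    convert this using 1
    rw [altJ]
    refine Finset.sum_equiv β.symm.permCongr ?_ ?_
    · intro σ
      simp only [GG, Finset.mem_filter, Finset.mem_univ, true_and, Equiv.permCongr_apply,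
        Equiv.symm_symm, Equiv.apply_symm_apply]
      exact ⟨fun h x => h _, fun h x => by simpa using h (β.symm x)⟩
    · intro σ _
      rw [Fr_pw, sg, sg, Equiv.Perm.sign_permCongr]
      congr 2
      funext x
      simp
  | zero => simp
  | add x y _ _ hx hy =>
    simp only [map_add, smul_add, Finset.sum_add_distrib]; exact add_mem hx hy
  | smul a x _ hx =>
    simp only [map_smul, smul_comm _ a, ← Finset.smul_sum]
    exact Submodule.smul_mem _ _ hx

theorem core_ind [CharZero k] {r t : ℕ} : ∀ (N : ℕ) (g : Fin (r+2*t) → ℕ) (v : KK k (r+2*t)),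
    ∑ x, g x = N → v ∈ Msub k (r+2*t) r t → dK k _ v = 0 →
    (∀ l l', l ≠ l' → g l = g l' → Fr k (Equiv.swap l l') v = -v) →
    v ∈ Bsub k (r+2*t) r t := by
  intro N
  induction N using Nat.strong_induction_on with
  | _ N ih =>
    intro g v hN hv hdv ha
    have hstep : ∀ b i, i < g b →
        (v - ∑ a ∈ Finset.univ.filter (fun a => g a = i), Fr k (Equiv.swap a b) v) ∈ Bsub k (r+2*t) r t := by
      intro b i hi
      refine ih _ ?_ (Function.update g b i) _ rfl ?_ ?_ (anti_step g hv ha b i hi)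
      · rw [← hN]
        refine Finset.sum_lt_sum ?_ ⟨b, Finset.mem_univ _, by simpa using hi⟩
        intro x _
        by_cases hx : x = b
        · subst hx; simp [hi.le]
        · simp [hx]
      · exact sub_mem hv (Submodule.sum_mem _ fun a _ => Fr_Msub _ hv)
      · rw [map_sub, map_sum, hdv, Finset.sum_eq_zero, sub_zero]
        intro a _
        rw [Fr_dK, hdv, map_zero]
    have hcount := lin_count g (fun l b => (Bsub k (r+2*t) r t).mkQ (Fr k (Equiv.swap l b) v))
      ((Bsub k (r+2*t) r t).mkQ v) (fun l b => by rw [Equiv.swap_comm])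
      (fun b i hi => by
        have h := (Submodule.Quotient.mk_eq_zero _).2 (hstep b i hi)
        rw [← Submodule.mkQ_apply, map_sub, map_sum, sub_eq_zero] at h
        exact h.symm)
      (fun b => by
        simp only [Equiv.swap_self]
        exact congrArg _ (Fr_one hv))
      (fun l b hlb hg => by
        rw [ha l b hlb hg, map_neg])
    have hlap := lap_M hv
    rw [hdv, map_zero, add_zero] at hlap
    have hB : dK k (r+2*t) (dl k _ v) ∈ Bsub k (r+2*t) r t :=
      Submodule.mem_sup_right (Submodule.mem_map_of_mem (dl_Kt (Msub_Kt hv)))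
    set κ : ℤ := ∑ x, (2*(g x:ℤ)+1 - (Finset.card (Finset.univ.filter (fun y => g y = g x)) : ℤ)) with hκ
    have hκ2 : (∑ b, (2 * (g b : ℤ) + 2 - (Finset.card (Finset.univ.filter (fun y => g y = g b)) : ℤ)))
        = κ + ((r + 2 * t : ℕ) : ℤ) := by
      rw [hκ]
      have : ((r + 2 * t : ℕ) : ℤ) = ∑ x : Fin (r+2*t), 1 := by simp
      rw [this, ← Finset.sum_add_distrib]
      exact Finset.sum_congr rfl fun _ _ => by ring
    have hz : (κ : k) • v ∈ Bsub k (r+2*t) r t := by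
      have h0 : (Bsub k (r+2*t) r t).mkQ ((κ : k) • v) = 0 := by
        have h1 := (Submodule.Quotient.mk_eq_zero _).2 hB
        rw [← Submodule.mkQ_apply, hlap, map_sub] at h1
        simp only [map_sum] at h1
        rw [hcount, hκ2, ← map_zsmul, ← map_sub, ← KK_zsmul] at h1
        rw [← h1]
        congr 1
        push_cast
        module
      exact (Submodule.Quotient.mk_eq_zero _).1 h0
    by_cases hk0 : κ = 0
    · have hav := avg_mem g hk0 hv
      rw [Finset.sum_congr rfl (g := fun _ => v)] at hav
      · rw [Finset.sum_const, ← Nat.cast_smul_eq_nsmul k] at hav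
        refine Submodule.mem_sup_left ?_
        refine (Submodule.smul_mem_iff _ ?_).1 hav
        rw [Nat.cast_ne_zero, Finset.card_ne_zero]
        exact ⟨1, by simp⟩
      · intro σ hσ
        simp only [Finset.mem_filter, Finset.mem_univ, true_and] at hσ
        rw [anti_sign g hv ha _ σ rfl hσ, smul_smul, sg_sq, one_smul]
    · exact (Submodule.smul_mem_iff _ (by exact_mod_cast hk0)).1 hz

theorem core_W [CharZero k] {r t : ℕ} (c : KK k n) (hc : c ∈ Wsub k n r t) (hd : dK k n c = 0) :
    c ∈ Bsub k n r t := by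
  refine reduce_multilinear (fun v hv hdv => ?_) c hc hd
  refine core_ind _ (fun x => (x : ℕ)) v rfl hv hdv ?_
  intro l l' hl hg
  exact absurd (Fin.ext hg) hl


/-! ### Final assembly -/

lemma dK_Kt [CharZero k] {t : ℕ} {v : KK k n} (hv : v ∈ Kt k n (t + 1)) : dK k n v ∈ Kt k n t := by
  rw [Kt_span] at hv
  induction hv using Submodule.span_induction with
  | mem x h =>
    obtain ⟨f, m, rfl⟩ := h
    rw [dK_ιMulti]
    refine Submodule.sum_mem _ fun j _ => ?_
    refine zsmul_mem ?_ _
    rw [Kt_span]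
    exact Submodule.subset_span ⟨_, _, rfl⟩
  | zero => simp
  | add x y _ _ hx hy => rw [map_add]; exact add_mem hx hy
  | smul a x _ hx => rw [map_smul]; exact Submodule.smul_mem _ _ hx

lemma D_eq [CharZero k] {D : ℕ → KK k n →ₗ[k] KK k n} (hD : IsKoszulDiff D) {t : ℕ} {v : KK k n}
    (hv : v ∈ Kt k n t) : D t v = dK k n v := by
  rw [Kt_span] at hv
  induction hv using Submodule.span_induction with
  | mem x h =>
    obtain ⟨f, m, rfl⟩ := h
    cases t with
    | zero =>
      rw [hD.1, ExteriorAlgebra.ιMulti_zero_apply, dK_tmul_one]; rfl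
    | succ t => rw [hD.2, dK_ιMulti]
  | zero => simp
  | add x y _ _ hx hy => rw [map_add, map_add, hx, hy]
  | smul a x _ hx => rw [map_smul, map_smul, hx]

variable (k n) in
def PP (e : ℕ) : KK k n →ₗ[k] KK k n :=
  TensorProduct.map (homogeneousComponent e) LinearMap.id

lemma PP_tmul (e : ℕ) (f : S k n) (ω : ExteriorAlgebra k (S2 k n)) :
    PP k n e (f ⊗ₜ ω) = (homogeneousComponent e f) ⊗ₜ ω := rfl

lemma hc_X (e : ℕ) (i : Fin n) (f : S k n) :
    homogeneousComponent (e+1) (X i * f) = X i * homogeneousComponent e f := by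
  induction f using MvPolynomial.induction_on' with
  | monomial d a =>
    have h1 : (monomial d a : S k n).IsHomogeneous d.degree := isHomogeneous_monomial _ rfl
    have h2 : (X i * monomial d a : S k n).IsHomogeneous (d.degree + 1) := by
      rw [add_comm]; exact (isHomogeneous_X _ _).mul h1
    rw [homogeneousComponent_of_mem ((mem_homogeneousSubmodule _ _).2 h1),
      homogeneousComponent_of_mem ((mem_homogeneousSubmodule _ _).2 h2)]
    by_cases h : e = d.degree
    · simp [h]
    · simp [h]
  | add p q hp hq => simp only [mul_add, map_add, hp, hq]

lemma PP_dK (e : ℕ) (c : KK k n) : dK k n (PP k n e c) = PP k n (e+2) (dK k n c) := by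
  induction c using TensorProduct.induction_on with
  | zero => simp
  | add x y hx hy => simp only [map_add, hx, hy]
  | tmul f ω =>
    rw [PP_tmul, dK_tmul, dK_tmul]
    simp only [map_smul, map_sum, PP_tmul]
    congr 1
    refine Finset.sum_congr rfl fun i _ => Finset.sum_congr rfl fun l _ => ?_
    rw [mul_assoc (X i), mul_assoc (X i), hc_X (e+1), hc_X e]

lemma monomial_prod : ∀ (e : ℕ) (d : Fin n →₀ ℕ), d.degree = e →
    ∃ w : Fin e → Fin n, (monomial d 1 : S k n) = ∏ s, X (w s) := by
  intro e
  induction e with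
  | zero =>
    intro d hd
    rw [Finsupp.degree_eq_zero_iff] at hd
    subst hd
    exact ⟨Fin.elim0, by simp⟩
  | succ e ih =>
    intro d hd
    obtain ⟨i, hi⟩ : ∃ i, d i ≠ 0 := by
      by_contra hcon
      push Not at hcon
      have : d = 0 := Finsupp.ext hcon
      subst this
      simp at hd
    have hle : Finsupp.single i 1 ≤ d := by
      rw [Finsupp.single_le_iff]; omega
    have hdd : d = Finsupp.single i 1 + (d - Finsupp.single i 1) := by
      rw [add_comm, tsub_add_cancel_of_le hle]
    obtain ⟨w, hw⟩ := ih (d - Finsupp.single i 1) (by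
      have := congrArg Finsupp.degree hdd
      rw [map_add, Finsupp.degree_single, hd] at this
      omega)
    refine ⟨Fin.cons i w, ?_⟩
    rw [Fin.prod_univ_succ]
    simp only [Fin.cons_zero, Fin.cons_succ]
    rw [← hw, X, monomial_mul, ← hdd, one_mul]

lemma S2_eq_sum [CharZero k] (p : S2 k n) :
    p = ∑ x : Fin n × Fin n, (2⁻¹ * lam x.1 x.2 p) • (q x.1 x.2 : S2 k n) := by
  rw [Fintype.sum_prod_type]
  simp only [mul_smul, ← Finset.smul_sum]
  rw [sum_lam_q, smul_smul, inv_mul_cancel₀ two_ne_zero, one_smul]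

lemma tmul_Wsub [CharZero k] {e t : ℕ} (f : S k n) (hf : f.IsHomogeneous e) (m : Fin t → S2 k n) :
    f ⊗ₜ[k] (ExteriorAlgebra.ιMulti k t m : ExteriorAlgebra k (S2 k n)) ∈ Wsub k n e t := by
  rw [f.as_sum, TensorProduct.sum_tmul]
  refine Submodule.sum_mem _ fun d hd => ?_
  have hdeg : d.degree = e := by
    have := hf (mem_support_iff.1 hd)
    rw [Finsupp.degree_eq_weight_one]
    exact this
  obtain ⟨w, hw⟩ := monomial_prod (k := k) e d hdeg
  have h1 : (monomial d (coeff d f) : S k n) = coeff d f • ∏ s, X (w s) := by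
    rw [← hw, smul_monomial, smul_eq_mul, mul_one]
  rw [h1, ← TensorProduct.smul_tmul']
  refine Submodule.smul_mem _ _ ?_
  have h2 : m = fun j => ∑ x : Fin n × Fin n, (2⁻¹ * lam x.1 x.2 (m j)) • (q x.1 x.2 : S2 k n) :=
    funext fun j => S2_eq_sum (m j)
  have h3 : (ExteriorAlgebra.ιMulti k t m : ExteriorAlgebra k (S2 k n)) =
      ∑ y : Fin t → Fin n × Fin n, (∏ j, (2⁻¹ * lam (y j).1 (y j).2 (m j))) •
        ExteriorAlgebra.ιMulti k t (fun j => (q (y j).1 (y j).2 : S2 k n)) := by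
    conv_lhs => rw [h2]
    have h4 := (ExteriorAlgebra.ιMulti k t (M := S2 k n)).toMultilinearMap.map_sum
      (fun j (x : Fin n × Fin n) => (2⁻¹ * lam x.1 x.2 (m j)) • (q x.1 x.2 : S2 k n))
    refine h4.trans (Finset.sum_congr rfl fun y _ => ?_)
    exact (ExteriorAlgebra.ιMulti k t (M := S2 k n)).toMultilinearMap.map_smul_univ _ _
  rw [h3, TensorProduct.tmul_sum]
  refine Submodule.sum_mem _ fun y _ => ?_
  rw [TensorProduct.tmul_smul]
  refine Submodule.smul_mem _ _ ?_
  exact Submodule.subset_span ⟨Sum.elim w (Sum.elim (fun j => (y j).1) (fun j => (y j).2)), rfl⟩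

lemma PP_Wsub [CharZero k] {t : ℕ} (e : ℕ) {c : KK k n} (hc : c ∈ Kt k n t) :
    PP k n e c ∈ Wsub k n e t := by
  rw [Kt_span] at hc
  induction hc using Submodule.span_induction with
  | mem x h =>
    obtain ⟨f, m, rfl⟩ := h
    rw [PP_tmul]
    exact tmul_Wsub _ (homogeneousComponent_isHomogeneous e f) m
  | zero => simp
  | add x y _ _ hx hy => rw [map_add]; exact add_mem hx hy
  | smul a x _ hx => rw [map_smul]; exact Submodule.smul_mem _ _ hx

lemma KtEven_le (t : ℕ) : KtEven k n t ≤ Kt k n t := by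
  rintro _ ⟨x, rfl⟩
  induction x using TensorProduct.induction_on with
  | zero => simp
  | add x y hx hy => rw [map_add]; exact add_mem hx hy
  | tmul f ω => exact ⟨(f : S k n) ⊗ₜ ω, rfl⟩

lemma seven_sum (f : S k n) (hf : f ∈ Seven k n) :
    ∃ N0, ∀ N, N0 ≤ N → f = ∑ e ∈ Finset.range N, homogeneousComponent (2*e) f := by
  refine Submodule.iSup_induction _ (motive := fun f : S k n => ∃ N0, ∀ N, N0 ≤ N →
    f = ∑ e ∈ Finset.range N, homogeneousComponent (2*e) f) hf ?_ ?_ ?_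
  · intro e0 f hf
    refine ⟨e0 + 1, fun N hN => ?_⟩
    rw [Finset.sum_eq_single e0]
    · rw [homogeneousComponent_of_mem hf, if_pos rfl]
    · intro e _ he
      rw [homogeneousComponent_of_mem hf, if_neg (by omega)]
    · intro h
      exact absurd (Finset.mem_range.2 (by omega)) h
  · exact ⟨0, fun N _ => by simp⟩
  · rintro f g ⟨N1, h1⟩ ⟨N2, h2⟩
    refine ⟨max N1 N2, fun N hN => ?_⟩
    simp only [map_add, Finset.sum_add_distrib]
    rw [← h1 N (le_trans (le_max_left _ _) hN), ← h2 N (le_trans (le_max_right _ _) hN)]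

lemma even_sum {t : ℕ} {c : KK k n} (hc : c ∈ KtEven k n t) :
    ∃ N0, ∀ N, N0 ≤ N → c = ∑ e ∈ Finset.range N, PP k n (2*e) c := by
  obtain ⟨x, rfl⟩ := hc
  induction x using TensorProduct.induction_on with
  | zero => exact ⟨0, fun N _ => by simp⟩
  | add x y hx hy =>
    obtain ⟨N1, h1⟩ := hx
    obtain ⟨N2, h2⟩ := hy
    refine ⟨max N1 N2, fun N hN => ?_⟩
    simp only [map_add, Finset.sum_add_distrib]
    rw [← h1 N (le_trans (le_max_left _ _) hN), ← h2 N (le_trans (le_max_right _ _) hN)]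
  | tmul f ω =>
    obtain ⟨N0, h⟩ := seven_sum (f : S k n) f.2
    refine ⟨N0, fun N hN => ?_⟩
    simp only [TensorProduct.map_tmul, PP_tmul, Submodule.subtype_apply]
    rw [← TensorProduct.sum_tmul, ← h N hN]

variable (k n) in
abbrev AA : Subalgebra k (KK k n) := Algebra.adjoin k {v : KK k n |
          ∃ (r : ℕ) (a : Fin (r+1) → Fin n) (b : Fin r → Fin n)
            (r' : ℕ) (a' : Fin (r'+1) → Fin n) (b' : Fin r' → Fin n),
            v = zel r (fun l => (xv (a l) : S1 k n)) (fun l => xv (b l)) *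
                  zel r' (fun l => (xv (a' l) : S1 k n)) (fun l => xv (b' l))}

lemma Zs_even (e : ℕ) : (Zs k n) ^ (2 * e) ≤ Subalgebra.toSubmodule (AA k n) := by
  induction e with
  | zero =>
    rw [mul_zero, Submodule.pow_zero]
    exact Submodule.one_le.2 (AA k n).one_mem
  | succ e ih =>
    rw [mul_add, Zs_pow_add]
    refine Submodule.mul_le.2 fun x hx y hy => ?_
    refine (AA k n).mul_mem (ih hx) ?_
    rw [show 2 * 1 = 1 + 1 from rfl, Zs_pow_add, Submodule.pow_one, Submodule.span_mul_span] at hy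
    refine (Submodule.span_le (p := Subalgebra.toSubmodule (AA k n)).2 ?_) hy
    rintro _ ⟨z, ⟨r, a, b, rfl⟩, z', ⟨r', a', b', rfl⟩, rfl⟩
    exact Algebra.subset_adjoin ⟨r, a, b, r', a', b', rfl⟩

theorem final_main [CharZero k]
    (D : ℕ → KK k n →ₗ[k] KK k n) (hD : IsKoszulDiff D)
    (t : ℕ) (c : KK k n) (hc : c ∈ KtEven k n t) (hcyc : D t c = 0) :
    ∃ u w : KK k n, u ∈ AA k n ∧
      u ∈ Kt k n t ∧ w ∈ Kt k n (t+1) ∧ c = u + D (t+1) w := by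
  have hcK := KtEven_le t hc
  rw [D_eq hD hcK] at hcyc
  have hmem : c ∈ Subalgebra.toSubmodule (AA k n) ⊔ (Kt k n (t+1)).map (dK k n) := by
    obtain ⟨N, hN⟩ := even_sum hc
    rw [hN N le_rfl]
    refine Submodule.sum_mem _ fun e _ => ?_
    have := core_W (PP k n (2*e) c) (PP_Wsub _ hcK) (by rw [PP_dK, hcyc, map_zero])
    have hle : Bsub k n (2*e) t ≤ Subalgebra.toSubmodule (AA k n) ⊔ (Kt k n (t+1)).map (dK k n) :=
      sup_le (le_trans (Zs_even e) le_sup_left) le_sup_right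
    exact hle this
  obtain ⟨u, hu, _, ⟨w, hw, rfl⟩, hcu⟩ := Submodule.mem_sup.1 hmem
  refine ⟨u, w, hu, ?_, hw, ?_⟩
  · rw [eq_sub_of_add_eq hcu]
    exact sub_mem hcK (dK_Kt hw)
  · rw [D_eq hD hw, hcu]


end Helpers

/-- Let `B ⊆ K` be the `k`-subalgebra generated by `1` and all products
`z_{a,b} · z_{a',b'}` of two of the cycles `z_{a,b}` (over all lengths and sequences of
variables), and `B_t = B ∩ K_t`.  Then every Koszul cycle `c ∈ ker(d_t)` all of whose
homogeneous components have even internal degree can be written as `c = u + d_{t+1}(w)`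
with `u ∈ B_t`, `w ∈ K_{t+1}`.  (Consequently the Koszul homology algebra of the second
Veronese `S^(2)` is generated by its lowest linear strand.) -/
theorem veronese_koszul_homology_generated_by_pairs (k : Type) [Field k] [CharZero k] (n : ℕ)
    (D : ℕ → KK k n →ₗ[k] KK k n) (hD : IsKoszulDiff D)
    (t : ℕ) (c : KK k n) (hc : c ∈ KtEven k n t) (hcyc : D t c = 0) :
    ∃ u w : KK k n,
      u ∈ Algebra.adjoin k {v : KK k n |
          ∃ (r : ℕ) (a : Fin (r+1) → Fin n) (b : Fin r → Fin n)
            (r' : ℕ) (a' : Fin (r'+1) → Fin n) (b' : Fin r' → Fin n),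
            v = zel r (fun l => (xv (a l) : S1 k n)) (fun l => xv (b l)) *
                  zel r' (fun l => (xv (a' l) : S1 k n)) (fun l => xv (b' l))} ∧
      u ∈ Kt k n t ∧ w ∈ Kt k n (t+1) ∧ c = u + D (t+1) w := by
  exact final_main D hD t c hc hcyc

end
end

section
/- Fix t ≥ 0. If a finite k-linear combination Σ c_{(a,b)} · z_{a,b}, taken over distinct semistandard pairs (a,b) of sequences of variables with |a| = t+1 and |b| = t, lies in the image of d_{t+1} : K_{t+1} → K_t, then all coefficients c_{(a,b)} are zero; that is, the homology classes of the semistandard z_{a,b} are linearly independent in the Koszul homology H_t(𝔪²). -/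
set_option maxHeartbeats 1000000
set_option synthInstance.maxHeartbeats 400000

open scoped TensorProduct
open MvPolynomial

noncomputable section

variable (k : Type) [Field k] (n : ℕ)

variable {k n}

variable (k n)

variable {k n}

/-- A pair of sequences of variables `a = (x_{i_1},…,x_{i_{t+1}})`, `b = (x_{j_1},…,x_{j_t})`
is *semistandard* if `i_1 < ⋯ < i_{t+1}`, `j_1 ≤ ⋯ ≤ j_t` and `i_1 ≤ j_1`. -/
def Semistandard {n t : ℕ} (a : Fin (t+1) → Fin n) (b : Fin t → Fin n) : Prop :=
  StrictMono a ∧ Monotone b ∧ ∀ h : 0 < t, a 0 ≤ b ⟨0, h⟩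

def sgLin (t : ℕ) (A : Fin (t+1) → Fin n) : S2 k n →ₗ[k] (Fin t → S k n) :=
  LinearMap.pi (fun i => (pderiv (R := k) (A i.succ)).toLinearMap ∘ₗ (S2 k n).subtype)

def sgAlt (t : ℕ) (A : Fin (t+1) → Fin n) : (S2 k n) [⋀^Fin t]→ₗ[k] S k n :=
  { ((Matrix.detRowAlternating (n := Fin t) (R := S k n)).toMultilinearMap.restrictScalars
      k).compLinearMap (fun _ => sgLin t A) with
    map_eq_zero_of_eq' := by
      intro v i j h hij
      exact (Matrix.detRowAlternating (n := Fin t) (R := S k n)).map_eq_zero_of_eq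
        (fun l => sgLin t A (v l)) (by simp only [h]) hij }

theorem sgAlt_apply (t : ℕ) (A : Fin (t+1) → Fin n) (m : Fin t → S2 k n) :
    sgAlt t A m = ∑ τ : Equiv.Perm (Fin t), ((Equiv.Perm.sign τ : ℤ) : S k n) *
      ∏ j, pderiv (A (τ j).succ) (m j : S k n) := by
  have : sgAlt t A m = Matrix.det (Matrix.of fun j i => pderiv (A i.succ) (m j : S k n)) := rfl
  rw [this, ← Matrix.det_transpose, Matrix.det_apply']
  rfl

def sgExt (t : ℕ) (A : Fin (t+1) → Fin n) : ExteriorAlgebra k (S2 k n) →ₗ[k] S k n :=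
  ExteriorAlgebra.liftAlternating (Pi.single t (sgAlt t A))

theorem sgExt_apply (t : ℕ) (A : Fin (t+1) → Fin n) (m : Fin t → S2 k n) :
    sgExt t A (ExteriorAlgebra.ιMulti k t m) = sgAlt t A m := by
  rw [sgExt, ExteriorAlgebra.liftAlternating_apply_ιMulti, Pi.single_eq_same]

def sgPsi (t : ℕ) (A : Fin (t+1) → Fin n) : KK k n →ₗ[k] S k n :=
  TensorProduct.lift ((LinearMap.mul k (S k n)).compl₁₂ (homogeneousComponent 1) (sgExt t A))

theorem sgPsi_apply (t : ℕ) (A : Fin (t+1) → Fin n) (f : S k n) (w) :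
    sgPsi t A (f ⊗ₜ[k] w) = homogeneousComponent 1 f * sgExt t A w := by
  simp [sgPsi]

theorem sg_hc (f : S k n) (m : S2 k n) : homogeneousComponent 1 (f * (m : S k n)) = 0 := by
  ext d
  rw [coeff_homogeneousComponent]
  split_ifs with h
  · rw [coeff_mul, coeff_zero]
    apply Finset.sum_eq_zero
    intro x hx
    have hm : (m : S k n).IsHomogeneous 2 := (mem_homogeneousSubmodule 2 _).1 m.2
    rw [hm.coeff_eq_zero, mul_zero]
    rw [Finset.HasAntidiagonal.mem_antidiagonal] at hx
    rw [← hx, map_add] at h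
    omega
  · simp

theorem sgPsi_boundary (t : ℕ) (A : Fin (t+1) → Fin n)
    (D : ℕ → KK k n →ₗ[k] KK k n) (hD : IsKoszulDiff D) (y : KK k n)
    (hy : y ∈ Submodule.map (D (t+1)) (Kt k n (t+1))) : sgPsi t A y = 0 := by
  obtain ⟨x, ⟨w, rfl⟩, rfl⟩ := hy
  induction w using TensorProduct.induction_on with
  | zero => simp
  | add u v hu hv => simp only [map_add, hu, hv, add_zero]
  | tmul f w =>
    obtain ⟨w, hw⟩ := w
    simp only [TensorProduct.map_tmul, LinearMap.id_apply, Submodule.subtype_apply]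
    rw [← ExteriorAlgebra.ιMulti_span_fixedDegree] at hw
    induction hw using Submodule.span_induction with
    | zero => simp
    | add u v _ _ hu hv => simp only [TensorProduct.tmul_add, map_add, hu, hv, add_zero]
    | smul c u _ hu => simp only [TensorProduct.tmul_smul, map_smul, hu, smul_zero]
    | mem u hu =>
      obtain ⟨m, rfl⟩ := hu
      rw [hD.2, map_sum]
      apply Finset.sum_eq_zero
      intro j _
      rw [map_zsmul, sgPsi_apply, sg_hc, zero_mul, smul_zero]

def sgP (t : ℕ) (A a : Fin (t+1) → Fin n) : Matrix (Fin (t+1)) (Fin (t+1)) (S k n) :=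
  Matrix.of (Fin.snoc (α := fun _ => Fin (t+1) → S k n)
    (fun (j : Fin t) i => if A j.succ = a i then 1 else 0) (fun i => X (a i)))

theorem sg_det (t : ℕ) (A a : Fin (t+1) → Fin n) (b : Fin t → Fin n) (τ : Equiv.Perm (Fin t)) :
    (∑ σ : Equiv.Perm (Fin (t+1)), ((Equiv.Perm.sign σ : ℤ) : S k n) * (X (a (σ (Fin.last t))) *
      ∏ j : Fin t, pderiv (A (τ j).succ) (X (b j) * X (a (σ j.castSucc)) : S k n)))
    = ((Equiv.Perm.sign τ : ℤ) : S k n) * ((∏ j, X (b j)) * (sgP t A a).det) := by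
  let N : Matrix (Fin (t+1)) (Fin (t+1)) (S k n) :=
    Matrix.of (Fin.snoc (α := fun _ => Fin (t+1) → S k n)
      (fun (j : Fin t) i => pderiv (A (τ j).succ) (X (b j) * X (a i) : S k n))
      (fun i => X (a i)))
  let N' : Matrix (Fin (t+1)) (Fin (t+1)) (S k n) :=
    Matrix.of (Fin.snoc (α := fun _ => Fin (t+1) → S k n)
      (fun (j : Fin t) i => X (b j) * (if A (τ j).succ = a i then 1 else 0))
      (fun i => X (a i)))
  let P' : Matrix (Fin (t+1)) (Fin (t+1)) (S k n) :=
    Matrix.of (Fin.snoc (α := fun _ => Fin (t+1) → S k n)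
      (fun (j : Fin t) i => (if A (τ j).succ = a i then 1 else 0))
      (fun i => X (a i)))
  have h1 : (∑ σ : Equiv.Perm (Fin (t+1)), ((Equiv.Perm.sign σ : ℤ) : S k n) *
      (X (a (σ (Fin.last t))) *
      ∏ j : Fin t, pderiv (A (τ j).succ) (X (b j) * X (a (σ j.castSucc)) : S k n))) = N.det := by
    rw [← Matrix.det_transpose, Matrix.det_apply']
    refine Finset.sum_congr rfl fun σ _ => ?_
    rw [Fin.prod_univ_castSucc, mul_comm (X _)]
    simp [N, Matrix.transpose_apply]
  have h2 : N.det = N'.det := by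
    apply Matrix.det_eq_of_forall_row_eq_smul_add_const
      (Fin.snoc (α := fun _ => S k n)
        (fun j => if A (τ j).succ = b j then 1 else 0) 0) (Fin.last t)
    · simp
    · intro i l
      induction i using Fin.lastCases with
      | last => simp [N, N']
      | cast j =>
        simp only [N, N', Matrix.of_apply, Fin.snoc_castSucc, Fin.snoc_last, Derivation.leibniz,
          pderiv_X, smul_eq_mul, Pi.single_apply]
        simp only [eq_comm]
        ring
  have h3 : N'.det = (∏ j, X (b j)) * P'.det := by
    have := Matrix.det_mul_column (Fin.snoc (α := fun _ => S k n) (fun j => X (b j)) 1) P'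
    rw [Fin.prod_univ_castSucc] at this
    simp only [Fin.snoc_castSucc, Fin.snoc_last, mul_one] at this
    rw [← this]
    congr 1
    ext1 i l
    induction i using Fin.lastCases with
    | last => simp [N', P']
    | cast j => simp [N', P']
  have h4 : P'.det = ((Equiv.Perm.sign τ : ℤ) : S k n) * (sgP t A a).det := by
    let f : Fin t ↪ Fin (t+1) := Fin.castSuccEmb
    have hr := Matrix.det_permute (τ.viaFintypeEmbedding f) (sgP (k := k) t A a)
    rw [Equiv.Perm.viaFintypeEmbedding_sign] at hr
    rw [← hr]
    congr 1
    ext1 i l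
    induction i using Fin.lastCases with
    | last =>
      rw [Matrix.submatrix_apply, Equiv.Perm.viaFintypeEmbedding_apply_notMem_range]
      · simp [P', sgP]
      · rintro ⟨j, hj⟩
        exact absurd hj (Fin.castSucc_lt_last j).ne
    | cast j =>
      have : τ.viaFintypeEmbedding f j.castSucc = (τ j).castSucc :=
        Equiv.Perm.viaFintypeEmbedding_apply_image τ f j
      rw [Matrix.submatrix_apply, this]
      simp [P', sgP]
  rw [h1, h2, h3, h4]
  ring

theorem sgPsi_zel (t : ℕ) (A a : Fin (t+1) → Fin n) (b : Fin t → Fin n) :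
    sgPsi t A (zel t (fun l => (xv (a l) : S1 k n)) (fun l => xv (b l))) =
      (t.factorial : S k n) * ((∏ j, X (b j)) * (sgP t A a).det) := by
  have h : ∀ σ : Equiv.Perm (Fin (t+1)), sgPsi t A (((Equiv.Perm.sign σ : ℤ)) •
      (((xv (a (σ (Fin.last t))) : S1 k n) : S k n) ⊗ₜ[k]
        (ExteriorAlgebra.ιMulti k t (fun j => mulW (xv (b j)) (xv (a (σ j.castSucc)))) :
          ExteriorAlgebra k (S2 k n)))) = ∑ τ : Equiv.Perm (Fin t),
          ((Equiv.Perm.sign τ : ℤ) : S k n) * (((Equiv.Perm.sign σ : ℤ) : S k n) *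
          (X (a (σ (Fin.last t))) *
      ∏ j : Fin t, pderiv (A (τ j).succ) (X (b j) * X (a (σ j.castSucc)) : S k n))) := by
    intro σ
    rw [map_zsmul, sgPsi_apply, homogeneousComponent_eq_self
      ((mem_homogeneousSubmodule 1 _).1 (xv (a (σ (Fin.last t)))).2), sgExt_apply, sgAlt_apply,
      Finset.mul_sum, zsmul_eq_mul, Finset.mul_sum]
    refine Finset.sum_congr rfl fun τ _ => ?_
    simp only [xv, mulW]
    ring
  rw [zel, map_sum, Finset.sum_congr rfl (fun σ _ => h σ), Finset.sum_comm]
  simp only [← Finset.mul_sum, sg_det]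
  have : ∀ τ : Equiv.Perm (Fin t), ∀ x : S k n,
      ((Equiv.Perm.sign τ : ℤ) : S k n) * (((Equiv.Perm.sign τ : ℤ) : S k n) * x) = x := by
    intro τ x
    rw [← mul_assoc, ← Int.cast_mul, Int.units_coe_mul_self, Int.cast_one, one_mul]
  simp only [this, Finset.sum_const, Finset.card_univ, Fintype.card_perm, Fintype.card_fin,
    nsmul_eq_mul]

def sgE (t : ℕ) (i : Fin n) (b : Fin t → Fin n) : Fin n →₀ ℕ :=
  Finsupp.single i 1 + ∑ j, Finsupp.single (b j) 1

theorem sg_X (t : ℕ) (i : Fin n) (b : Fin t → Fin n) :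
    (∏ j, X (b j)) * X i = (monomial (sgE t i b) 1 : S k n) := by
  have : (∏ j, X (b j) : S k n) = monomial (∑ j, Finsupp.single (b j) 1) 1 := by
    simp only [monomial_sum_one]
    rfl
  rw [this, X, monomial_mul, one_mul, sgE, add_comm]

theorem sg_coeff (t : ℕ) (A a : Fin (t+1) → Fin n) (b : Fin t → Fin n) (μ : Fin n →₀ ℕ) :
    coeff μ ((∏ j, X (b j)) * (sgP t A a).det : S k n) =
      ∑ σ : Equiv.Perm (Fin (t+1)), ((Equiv.Perm.sign σ : ℤ) : k) *
        if (∀ j : Fin t, A j.succ = a (σ j.castSucc)) ∧ sgE t (a (σ (Fin.last t))) b = μ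
        then 1 else 0 := by
  rw [← Matrix.det_transpose, Matrix.det_apply', Finset.mul_sum, coeff_sum]
  refine Finset.sum_congr rfl fun σ _ => ?_
  rw [Fin.prod_univ_castSucc]
  simp only [Matrix.transpose_apply, sgP, Matrix.of_apply, Fin.snoc_castSucc, Fin.snoc_last,
    Finset.prod_ite_zero, Finset.prod_const_one]
  have : ∀ (e : ℤ) (p r x : S k n), p * ((e : S k n) * (r * x)) = C (e : k) * (r * (p * x)) := by
    intro e p r x
    rw [map_intCast]
    ring
  rw [this, coeff_C_mul, sg_X]
  congr 1
  by_cases h : ∀ j : Fin t, A j.succ = a (σ j.castSucc)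
  · simp [h, coeff_monomial]
  · simp [h]

theorem sgE_mul (t : ℕ) (i : Fin n) (b : Fin t → Fin n) :
    Finsupp.toMultiset (sgE t i b) = i ::ₘ (List.ofFn b : Multiset (Fin n)) := by
  rw [sgE, map_add, map_sum]
  simp only [Finsupp.toMultiset_single, one_smul]
  rw [Multiset.singleton_add, ← List.sum_ofFn]
  congr 1
  have : ∀ l : List (Fin n), (l.map (fun x => ({x} : Multiset (Fin n)))).sum = l := by
    intro l
    induction l with
    | nil => rfl
    | cons x l ih => rw [List.map_cons, List.sum_cons, ih]; rfl
  rw [← this, List.map_ofFn]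
  rfl

theorem sg_unique (t : ℕ) (A a : Fin (t+1) → Fin n) (B b : Fin t → Fin n)
    (hAB : Semistandard A B) (hab : Semistandard a b) (σ : Equiv.Perm (Fin (t+1)))
    (h1 : ∀ j : Fin t, A j.succ = a (σ j.castSucc))
    (h2 : sgE t (a (σ (Fin.last t))) b = sgE t (A 0) B) : a = A ∧ b = B := by
  have h2' := congrArg Finsupp.toMultiset h2
  rw [sgE_mul, sgE_mul] at h2'
  have hb : ∀ (a : Fin (t+1) → Fin n) (b : Fin t → Fin n), Semistandard a b → 
      ∀ x ∈ List.ofFn b, a 0 ≤ x := by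
    intro a b h x hx
    rw [List.mem_ofFn] at hx
    obtain ⟨j, rfl⟩ := hx
    have ht : 0 < t := lt_of_le_of_lt (Nat.zero_le _) j.2
    exact (h.2.2 ht).trans (h.2.1 (by simp [Fin.le_def]))
  have key : a (σ (Fin.last t)) = A 0 := by
    by_contra hne
    have m1 : A 0 ∈ a (σ (Fin.last t)) ::ₘ (List.ofFn b : Multiset (Fin n)) := by
      rw [h2']; simp
    have m2 : a (σ (Fin.last t)) ∈ A 0 ::ₘ (List.ofFn B : Multiset (Fin n)) := by
      rw [← h2']; simp
    rw [Multiset.mem_cons, Multiset.mem_coe] at m1 m2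
    have l1 := hb a b hab _ (m1.resolve_left (Ne.symm hne))
    have l2 := hb A B hAB _ (m2.resolve_left hne)
    obtain ⟨i, hi⟩ := σ.surjective 0
    induction i using Fin.lastCases with
    | last => rw [hi] at l2 hne; exact hne (le_antisymm l1 l2)
    | cast j =>
      have := h1 j
      rw [hi] at this
      have := hAB.1 (Fin.succ_pos j)
      omega
  rw [key, Multiset.cons_inj_right, Multiset.coe_eq_coe] at h2'
  constructor
  · rw [← hab.1.range_inj hAB.1]
    rw [← σ.surjective.range_comp a]
    ext x
    constructor
    · rintro ⟨i, rfl⟩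
      induction i using Fin.lastCases with
      | last => exact ⟨0, key.symm⟩
      | cast j => exact ⟨j.succ, h1 j⟩
    · rintro ⟨i, rfl⟩
      induction i using Fin.cases with
      | zero => exact ⟨Fin.last t, key⟩
      | succ j => exact ⟨j.castSucc, (h1 j).symm⟩
  · exact List.ofFn_injective
      (h2'.eq_of_sortedLE hab.2.1.sortedLE_ofFn hAB.2.1.sortedLE_ofFn)

theorem sg_rot (t : ℕ) (j : Fin t) : finRotate (t+1) j.castSucc = j.succ :=
  finRotate_of_lt j.2

theorem sg_diag (t : ℕ) (A : Fin (t+1) → Fin n) (B : Fin t → Fin n)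
    (hAB : Semistandard A B) :
    coeff (sgE t (A 0) B) ((∏ j, X (B j)) * (sgP t A A).det : S k n) ≠ 0 := by
  rw [sg_coeff, Finset.sum_eq_single (finRotate (t+1))]
  · rw [if_pos, mul_one]
    · rcases Int.units_eq_one_or (Equiv.Perm.sign (finRotate (t+1))) with h | h <;> rw [h] <;> simp
    · refine ⟨fun j => by rw [sg_rot], by rw [finRotate_last]⟩
  · intro σ _ hσ
    rw [if_neg, mul_zero]
    rintro ⟨h, -⟩
    apply hσ
    have hc : ∀ j : Fin t, σ j.castSucc = finRotate (t+1) j.castSucc := fun j => by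
      rw [sg_rot]; exact (hAB.1.injective (h j)).symm
    ext1 i
    induction i using Fin.lastCases with
    | cast j => exact hc j
    | last =>
      obtain ⟨i, hi⟩ := σ.surjective 0
      induction i using Fin.lastCases with
      | last => rw [hi, finRotate_last]
      | cast j =>
        rw [hc, sg_rot] at hi
        exact absurd hi (Fin.succ_ne_zero j)
  · simp

/-- Fix `t ≥ 0`.  If a finite `k`-linear combination `Σ c_{(a,b)} z_{a,b}`
over distinct semistandard pairs `(a,b)` of sequences of variables (with `|a| = t+1`,
`|b| = t`) is a Koszul boundary, i.e. lies in the image of `d_{t+1} : K_{t+1} → K_t`, then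
all coefficients vanish; i.e. the classes of the semistandard `z_{a,b}` are linearly
independent in `H_t(𝔪²)`. -/
theorem semistandard_zel_linearly_independent (k : Type) [Field k] [CharZero k] (n : ℕ)
    (t : ℕ) (c : ((Fin (t+1) → Fin n) × (Fin t → Fin n)) → k)
    (hsupp : ∀ p, ¬ Semistandard p.1 p.2 → c p = 0)
    (D : ℕ → KK k n →ₗ[k] KK k n) (hD : IsKoszulDiff D)
    (hbound : (∑ p : (Fin (t+1) → Fin n) × (Fin t → Fin n),
        c p • (zel t (fun l => (xv (p.1 l) : S1 k n)) (fun l => xv (p.2 l)) : KK k n)) ∈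
      Submodule.map (D (t+1)) (Kt k n (t+1))) :
    ∀ p, c p = 0 := by
  rintro ⟨A, B⟩
  by_contra hne
  have hAB : Semistandard A B := by
    by_contra h
    exact hne (hsupp (A, B) h)
  have h0 := sgPsi_boundary t A D hD _ hbound
  rw [map_sum] at h0
  have h1 := congrArg (coeff (sgE t (A 0) B)) h0
  rw [coeff_sum, Finset.sum_eq_single (A, B), map_smul, sgPsi_zel, coeff_smul,
    ← map_natCast (C : k →+* S k n), coeff_C_mul, coeff_zero, smul_eq_mul] at h1
  · rcases mul_eq_zero.1 h1 with h | h
    · exact hne h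
    · rcases mul_eq_zero.1 h with h | h
      · exact Nat.factorial_ne_zero t (by exact_mod_cast h)
      · exact sg_diag t A B hAB h
  · rintro ⟨a, b⟩ _ hp
    by_cases hab : Semistandard a b
    · rw [map_smul, sgPsi_zel, coeff_smul, ← map_natCast (C : k →+* S k n), coeff_C_mul,
        sg_coeff, Finset.sum_eq_zero, mul_zero, smul_zero]
      intro σ _
      rw [if_neg, mul_zero]
      rintro ⟨g1, g2⟩
      obtain ⟨rfl, rfl⟩ := sg_unique t A a B b hAB hab σ g1 g2
      exact hp rfl
    · rw [hsupp (a, b) hab, zero_smul, map_zero, coeff_zero]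
  · simp

end
end
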